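/- arXiv:1504.05293 — 2 statements merged into one kernel-verified Lean document; each statement's English description precedes it below -/
import Mathlib

section
/- Let n ≡ 1 (mod 2) and let r, s be nonnegative integers with rs ≠ 0 and r + s = (n−1)/2. Then an HW(n; r, s; 3, 7) exists if and only if n ≡ 21 (mod 42), except possibly when n = 21 and r ∈ {2, 4, 6}. Concretely: if an HW(n; r, s; 3, 7) exists then n ≡ 21 (mod 42); and conversely, if n ≡ 21 (mod 42) and either n > 21 or (n = 21 and r ∉ {2, 4, 6}), then an HW(n; r, s; 3, 7) exists. -/
open SimpleGraph

/-- `F` is an `H`-factor (of the complete graph on its vertex type, or of any graph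
containing it): every connected component of `F`, viewed as an induced subgraph,
is isomorphic to `H`.  Since `F` is a graph on all of `V`, it is automatically spanning. -/
def IsHFactor {V W : Type*} (H : SimpleGraph W) (F : SimpleGraph V) : Prop :=
  ∀ c : F.ConnectedComponent, Nonempty (F.induce c.supp ≃g H)

/-- A `C_k`-factor: a spanning subgraph each of whose connected components is a
cycle of length `k` (in particular it is 2-regular). -/
def IsCycleFactor {V : Type*} (k : ℕ) (F : SimpleGraph V) : Prop :=
  IsHFactor (SimpleGraph.cycleGraph k) F

/-- `(G; C_m^r, C_k^s)`: a partition of the edge set of `G` into `r` `C_m`-factors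
and `s` `C_k`-factors. -/
def IsCycleDecomp {V : Type*} (G : SimpleGraph V) (m k r s : ℕ) : Prop :=
  ∃ F : Fin r ⊕ Fin s → SimpleGraph V,
    (∀ i, F i ≤ G) ∧
    (∀ e ∈ G.edgeSet, ∃! i, e ∈ (F i).edgeSet) ∧
    (∀ i : Fin r, IsCycleFactor m (F (Sum.inl i))) ∧
    (∀ j : Fin s, IsCycleFactor k (F (Sum.inr j)))

/-!
A `k`-cycle factor on `n` vertices forces `k ∣ n`; this gives necessity.

For sufficiency write `n = 21 * m` with `m` odd and take `ZMod m × ZMod 21` as vertex set, with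
columns `{x} × ZMod 21`. As `2` is invertible modulo `m`, every edge between different columns can
be written as `{(x, a), (x + c • d, b)}`, where `c ∈ {1, 2}` depends only on the levels `a` and `b`,
and where `d` is unique up to sign. For each `d` the edges of this kind can be covered by `21`
factors, of which `21`, `7` or `0` consist of triangles and the others of `7`-cycles. The columns
themselves need ten factors, of which any number may be of triangles, and together with one `d` they
can be covered with `18`, `19` or `20` factors of triangles out of `31`. These pieces add up to
every `r`. As the factors are 2-regular and there are only `(n - 1) / 2` of them, covering all edges
already makes them edge-disjoint.

Most factors arise from base blocks that are repeated at every column. The exceptions are the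
`21` factors of triangles and the `7`-cycles on levels congruent modulo `3`: there the block at a
column is chosen by a closed walk in a graph of ten states along each coset of the subgroup
generated by `d`.
-/

section Factors

variable {V V' W I : Type*} {H : SimpleGraph W} {F : SimpleGraph V} {F' : SimpleGraph V'}

theorem IsHFactor.of_iso (φ : F ≃g F') (hF' : IsHFactor H F') : IsHFactor H F := fun c =>
  (hF' (φ.connectedComponentEquiv c)).map fun ψ =>
    RelIso.trans ⟨ConnectedComponent.isoEquivSupp φ c, φ.map_rel_iff'⟩ ψ

theorem isHFactor_bot_boxProd (hH : H.Connected) :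
    IsHFactor H ((⊥ : SimpleGraph I) □ H) := by
  refine ConnectedComponent.ind fun ⟨i, w₀⟩ => ?_
  have mem_supp (x : I × W) :
      x ∈ (((⊥ : SimpleGraph I) □ H).connectedComponentMk (i, w₀)).supp ↔ x.1 = i := by
    rw [ConnectedComponent.mem_supp_iff, ConnectedComponent.eq, reachable_boxProd, reachable_bot,
      and_iff_left (hH.preconnected _ _)]
  refine ⟨⟨⟨fun x => x.1.2, fun w => ⟨(i, w), (mem_supp _).2 rfl⟩, fun x => ?_, fun _ => rfl⟩, ?_⟩⟩
  · exact Subtype.ext (Prod.ext ((mem_supp x).1 x.2).symm rfl)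
  · intro x y
    have hxy : x.1.1 = y.1.1 := ((mem_supp x).1 x.2).trans ((mem_supp y).1 y.2).symm
    simp [boxProd_adj, hxy]

theorem IsHFactor.card_dvd [Finite V] (hF : IsHFactor H F) : Nat.card W ∣ Nat.card V := by
  have fiber (c : F.ConnectedComponent) :
      Nat.card {v // F.connectedComponentMk v = c} = Nat.card W :=
    Nat.card_congr (hF c).some.toEquiv
  have := Fintype.ofFinite F.ConnectedComponent
  rw [← Nat.card_congr (Equiv.sigmaFiberEquiv F.connectedComponentMk), Nat.card_sigma]
  simp [fiber]

theorem IsHFactor.isRegularOfDegree [Fintype V] [DecidableRel F.Adj] [H.LocallyFinite] {d : ℕ}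
    (hF : IsHFactor H F) (hH : H.IsRegularOfDegree d) : F.IsRegularOfDegree d := by
  classical
  intro v
  let v' : (F.connectedComponentMk v).supp := ⟨v, rfl⟩
  obtain ⟨ψ⟩ := hF (F.connectedComponentMk v)
  have neighbors_in_component : F.neighborSet v' ⊆ (F.connectedComponentMk v).supp := fun _ hw =>
    ConnectedComponent.sound (Adj.reachable (Adj.symm hw))
  rw [← hH (ψ v'), ψ.degree_eq, degree_induce_of_neighborSet_subset neighbors_in_component]

theorem existsUnique_adj_of_cover {ι : Type*} [Fintype V] [Fintype ι] {F : ι → SimpleGraph V}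
    [∀ i, DecidableRel (F i).Adj] {d : ℕ} (hreg : ∀ i, (F i).IsRegularOfDegree d)
    (hcard : Fintype.card V = Fintype.card ι * d + 1)
    (hcover : ∀ u v, u ≠ v → ∃ i, (F i).Adj u v) {u v : V} (huv : u ≠ v) :
    ∃! i, (F i).Adj u v := by
  classical
  let toNeighbor (p : Σ i, (F i).neighborSet u) : {w // u ≠ w} := ⟨p.2, p.2.2.ne⟩
  have surjective : Function.Surjective toNeighbor := fun ⟨w, hw⟩ =>
    (hcover u w hw).elim fun i hi => ⟨⟨i, w, hi⟩, rfl⟩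
  have injective : Function.Injective toNeighbor := by
    refine (surjective.bijective_of_nat_card_le ?_).1
    have degree_eq (i : ι) : Fintype.card ((F i).neighborSet u) = d :=
      ((F i).card_neighborSet_eq_degree u).trans (hreg i u)
    rw [Nat.card_eq_fintype_card, Fintype.card_sigma, Nat.card_eq_fintype_card]
    simp [degree_eq, hcard, Fintype.card_subtype_compl]
  obtain ⟨i, hi⟩ := hcover u v huv
  refine ⟨i, hi, fun j hj => ?_⟩
  exact congrArg Sigma.fst (@injective ⟨j, v, hj⟩ ⟨i, v, hi⟩ rfl)

theorem isCycleFactor_map_boxProd {k : ℕ} (hk : 1 < k) (φ : I × Fin k ≃ V) :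
    IsCycleFactor k (((⊥ : SimpleGraph I) □ cycleGraph k).map φ) := by
  obtain ⟨k, rfl⟩ := Nat.exists_eq_add_of_lt hk
  exact (isHFactor_bot_boxProd cycleGraph_connected).of_iso (Iso.map φ _).symm

theorem IsCycleFactor.dvd_card [Finite V] {k : ℕ} (hF : IsCycleFactor k F) : k ∣ Nat.card V := by
  simpa using IsHFactor.card_dvd hF

theorem IsCycleDecomp.dvd_card {V : Type*} [Finite V] {G : SimpleGraph V} {m k r s : ℕ}
    (h : IsCycleDecomp G m k r s) (hr : r ≠ 0) (hs : s ≠ 0) :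
    m ∣ Nat.card V ∧ k ∣ Nat.card V := by
  obtain ⟨F, -, -, hm, hk⟩ := h
  exact ⟨(hm ⟨0, Nat.pos_of_ne_zero hr⟩).dvd_card, (hk ⟨0, Nat.pos_of_ne_zero hs⟩).dvd_card⟩

theorem cycleGraph_adj_succ_mod {k i : ℕ} (hk : 1 < k) (hi : i < k) :
    (cycleGraph k).Adj ⟨i, hi⟩ ⟨(i + 1) % k, Nat.mod_lt _ (by lia)⟩ := by
  obtain ⟨k, rfl⟩ := Nat.exists_eq_add_of_le' hk
  rw [cycleGraph_adj, sub_eq_iff_eq_add, sub_eq_iff_eq_add]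
  exact Or.inr (Fin.ext (by simp [Fin.val_add, add_comm]))

theorem IsCycleFactor.isRegularOfDegree_two [Fintype V] [DecidableRel F.Adj] {k : ℕ} (hk : 3 ≤ k)
    (hF : IsCycleFactor k F) : F.IsRegularOfDegree 2 := by
  obtain ⟨k, rfl⟩ := Nat.exists_eq_add_of_le' hk
  exact IsHFactor.isRegularOfDegree hF fun _ => cycleGraph_degree_three_le

end Factors

section Coverings

theorem exists_family_of_rel {α β : Type*} {R : α → β → Prop} {a : α} {n : ℕ} {L : Multiset β}
    (h : (n • ({a} : Multiset α)).Rel R L) :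
    ∃ f : Fin n → β, (∀ i, R a (f i)) ∧ ∀ b ∈ L, ∃ i, f i = b := by
  obtain ⟨l, rfl⟩ := Quot.exists_rep L
  obtain rfl : l.length = n := by simpa using (Multiset.card_eq_card_of_rel h).symm
  refine ⟨l.get, fun i => ?_, fun b hb => List.mem_iff_get.1 hb⟩
  obtain ⟨a', ha', hR⟩ := Multiset.exists_mem_of_rel_of_mem (Multiset.rel_flip.2 h) (l.get_mem i)
  rwa [Multiset.mem_singleton.1 (Multiset.mem_of_mem_nsmul ha')] at hR

variable {V : Type*} {E E' : V → V → Prop} {K K' : Multiset ℕ}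

/-- `E` is covered by a family of cycle factors of `V` whose cycle lengths, one for each factor of
the family, form the multiset `K`. The factors may overlap and may have edges outside `E`: when
`E` is the edge set of the complete graph and `K` is as small as possible, a covering is
automatically a partition. -/
def CoveredBy (E : V → V → Prop) (K : Multiset ℕ) : Prop :=
  ∃ L : Multiset (SimpleGraph V), K.Rel IsCycleFactor L ∧ ∀ u v, E u v → ∃ F ∈ L, F.Adj u v

namespace CoveredBy

theorem mono (h : CoveredBy E K) (hE : ∀ u v, E' u v → E u v) : CoveredBy E' K :=
  h.imp fun _ hL => ⟨hL.1, fun u v huv => hL.2 u v (hE u v huv)⟩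

theorem add (h : CoveredBy E K) (h' : CoveredBy E' K') :
    CoveredBy (fun u v => E u v ∨ E' u v) (K + K') := by
  obtain ⟨L, hL, hE⟩ := h
  obtain ⟨L', hL', hE'⟩ := h'
  refine ⟨L + L', hL.add hL', fun u v huv => ?_⟩
  obtain ⟨F, hF, hadj⟩ | ⟨F, hF, hadj⟩ := huv.imp (hE u v) (hE' u v)
  · exact ⟨F, Multiset.mem_add.2 (Or.inl hF), hadj⟩
  · exact ⟨F, Multiset.mem_add.2 (Or.inr hF), hadj⟩

theorem add_smul {m k r r' s s' : ℕ} (h : CoveredBy E (r • {m} + s • {k}))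
    (h' : CoveredBy E' (r' • {m} + s' • {k})) :
    CoveredBy (fun u v => E u v ∨ E' u v) ((r + r') • {m} + (s + s') • {k}) := by
  simpa only [_root_.add_smul, add_add_add_comm] using h.add h'

theorem symm (h : CoveredBy E K) : CoveredBy (fun u v => E u v ∨ E v u) K :=
  h.imp fun _ hL => ⟨hL.1, fun u v huv => huv.elim (hL.2 u v) fun hvu =>
    (hL.2 v u hvu).imp fun _ hF => ⟨hF.1, hF.2.symm⟩⟩

theorem sum {α : Type*} {E : α → V → V → Prop} {K : α → Multiset ℕ} (l : List α)
    (h : ∀ a ∈ l, CoveredBy (E a) (K a)) :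
    CoveredBy (fun u v => ∃ a ∈ l, E a u v) (l.map K).sum := by
  induction l with
  | nil => exact ⟨0, .zero, by simp⟩
  | cons a l ih =>
    rw [List.forall_mem_cons] at h
    simpa using h.1.add (ih h.2)

theorem comap {V' : Type*} (φ : V' ≃ V) (h : CoveredBy E K) :
    CoveredBy (fun u v => E (φ u) (φ v)) K := by
  obtain ⟨L, hL, hE⟩ := h
  refine ⟨L.map (SimpleGraph.comap φ), Multiset.rel_map_right.2 (hL.mono fun k _ F _ hF => ?_),
    fun u v huv => ?_⟩
  · exact IsHFactor.of_iso (Iso.comap φ F) hF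
  · obtain ⟨F, hF, hadj⟩ := hE _ _ huv
    exact ⟨_, Multiset.mem_map_of_mem _ hF, hadj⟩

theorem isCycleDecomp [Fintype V] {m k r s : ℕ} (hm : 3 ≤ m) (hk : 3 ≤ k)
    (hcard : Fintype.card V = (r + s) * 2 + 1)
    (h : CoveredBy (fun u v : V => u ≠ v) (r • {m} + s • {k})) :
    IsCycleDecomp (⊤ : SimpleGraph V) m k r s := by
  classical
  obtain ⟨L, hL, hcover⟩ := h
  obtain ⟨L₁, L₂, hL₁, hL₂, rfl⟩ := Multiset.rel_add_left.1 hL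
  obtain ⟨F₁, hF₁, mem₁⟩ := exists_family_of_rel hL₁
  obtain ⟨F₂, hF₂, mem₂⟩ := exists_family_of_rel hL₂
  have cover (u v : V) (huv : u ≠ v) : ∃ i, (Sum.elim F₁ F₂ i).Adj u v := by
    obtain ⟨F, hF, hadj⟩ := hcover u v huv
    rcases Multiset.mem_add.1 hF with hF | hF
    · obtain ⟨i, rfl⟩ := mem₁ F hF
      exact ⟨Sum.inl i, hadj⟩
    · obtain ⟨i, rfl⟩ := mem₂ F hF
      exact ⟨Sum.inr i, hadj⟩
  have regular : ∀ i, (Sum.elim F₁ F₂ i).IsRegularOfDegree 2 := Sum.rec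
    (fun i => (hF₁ i).isRegularOfDegree_two hm) (fun i => (hF₂ i).isRegularOfDegree_two hk)
  refine ⟨Sum.elim F₁ F₂, fun _ => le_top, fun e he => ?_, hF₁, hF₂⟩
  induction e with
  | h u v => exact existsUnique_adj_of_cover regular (by simpa using hcard) cover he

end CoveredBy

end Coverings

section Development

/-- The vertices of the construction: `G` indexes the columns, and each column has `21` levels. -/
abbrev Vertex (G : Type*) : Type _ := G × ZMod 21

/-- Points of a base block are natural numbers: `21 * o + a` with `a < 21` is the point of level `a`
lying `o` steps of length `d` to the right of the column `x` at which the block is placed. -/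
def place {G : Type*} [AddCommGroup G] (d x : G) (e : ℕ) : Vertex G :=
  (x + (e / 21) • d, (e : ZMod 21))

/-- Raises the level of a point by `c` modulo `21`, in the same column. -/
def raise (c e : ℕ) : ℕ := 21 * (e / 21) + (e + c) % 21

/-- The ordered pairs of consecutive points on the `k`-cycles obtained by cutting a list of `21`
points into pieces of length `k`. -/
def cycleEdges (k : ℕ) (B : List ℕ) : List (ℕ × ℕ) :=
  (List.range (21 / k)).flatMap fun j => (List.range k).flatMap fun i =>
    let start := B.getD (k * j + i) 0
    let next := B.getD (k * j + (i + 1) % k) 0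
    [(start, next), (next, start)]

/-- The edges of the cycles in a base block and in all its raisings by multiples of `q`. -/
def developedEdges (k q : ℕ) (B : List ℕ) : List (ℕ × ℕ) :=
  (List.range (21 / q)).flatMap fun g => cycleEdges k (B.map (raise (q * g)))

/-- The edges of a list that run to the right from a point `o` steps away from the base column,
moved so that they start in the base column. -/
def edgesFrom (o : ℕ) (T : List (ℕ × ℕ)) : List (ℕ × ℕ) :=
  (T.filter fun p => p.1 / 21 = o ∧ 21 * o ≤ p.2).map fun p => (p.1 - 21 * o, p.2 - 21 * o)

variable {G : Type*} [AddCommGroup G]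

/-- The edges obtained by placing the pairs in `T` at every column. -/
def Joins (d : G) (T : List (ℕ × ℕ)) (u v : Vertex G) : Prop :=
  ∃ x, ∃ p ∈ T, u = place d x p.1 ∧ v = place d x p.2

theorem place_raise (d x : G) (c e : ℕ) :
    place d x (raise c e) = place d x e + (0, (c : ZMod 21)) := by
  have column : raise c e / 21 = e / 21 := by unfold raise; lia
  have level : ((raise c e : ℕ) : ZMod 21) = e + c := by
    rw [← Nat.cast_add, ZMod.natCast_eq_natCast_iff', raise, Nat.mul_add_mod, Nat.mod_mod]
  simp [place, column, level]

theorem place_add_mul (d x : G) (e o : ℕ) :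
    place d (x - o • d) (e + 21 * o) = place d x e := by
  have column : (e + 21 * o) / 21 = e / 21 + o := by lia
  have level : ((21 : ℕ) : ZMod 21) = 0 := ZMod.natCast_self 21
  simp only [place, column, add_smul, Nat.cast_add, Nat.cast_mul, level, zero_mul, add_zero]
  congr 1
  abel

theorem place_val_add_mul (d x : G) (a : ZMod 21) (o : ℕ) :
    place d x (a.val + 21 * o) = (x + o • d, a) := by
  have column : (a.val + 21 * o) / 21 = o := by have := ZMod.val_lt a; lia
  have level : ((21 : ℕ) : ZMod 21) = 0 := ZMod.natCast_self 21
  simp only [place, column, Nat.cast_add, Nat.cast_mul, level, zero_mul, add_zero,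
    ZMod.natCast_zmod_val]

theorem mem_cycleEdges {k : ℕ} {B : List ℕ} {p : ℕ × ℕ} :
    p ∈ cycleEdges k B ↔ ∃ j < 21 / k, ∃ i < k,
      p = (B.getD (k * j + i) 0, B.getD (k * j + (i + 1) % k) 0) ∨
      p = (B.getD (k * j + (i + 1) % k) 0, B.getD (k * j + i) 0) := by
  simp [cycleEdges]

theorem mem_edgesFrom {o : ℕ} {T : List (ℕ × ℕ)} {p : ℕ × ℕ} (hp : p ∈ edgesFrom o T) :
    (p.1 + 21 * o, p.2 + 21 * o) ∈ T := by
  simp only [edgesFrom, List.mem_map, List.mem_filter, decide_eq_true_eq] at hp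
  obtain ⟨⟨e, e'⟩, ⟨hmem, rfl, hle⟩, rfl⟩ := hp
  convert hmem using 2 <;> lia

theorem coveredBy_joins_of_subset_append {d : G} {T T₁ T₂ : List (ℕ × ℕ)}
    {K₁ K₂ : Multiset ℕ}
    (h₁ : CoveredBy (Joins d T₁) K₁) (h₂ : CoveredBy (Joins d T₂) K₂) (hT : T ⊆ T₁ ++ T₂) :
    CoveredBy (Joins d T) (K₁ + K₂) := by
  refine (h₁.add h₂).mono ?_
  rintro u v ⟨x, p, hp, huv⟩
  exact (List.mem_append.1 (hT hp)).imp (⟨x, p, ·, huv⟩) (⟨x, p, ·, huv⟩)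

variable [Finite G] {k : ℕ} {d : G} {B : G → List ℕ}

theorem bijective_place_getD {t : ℕ} (hkt : k * t = 21) (hlen : ∀ x, (B x).length = 21)
    (hsurj : ∀ v, ∃ x, ∃ e ∈ B x, place d x e = v) :
    Function.Bijective fun p : (G × Fin t) × Fin k =>
      place d p.1.1 ((B p.1.1).getD (k * p.1.2 + p.2) 0) := by
  refine Function.Surjective.bijective_of_nat_card_le (fun v => ?_) ?_
  · obtain ⟨x, e, he, rfl⟩ := hsurj v
    obtain ⟨i, hi, rfl⟩ := List.getElem_of_mem he
    have hi21 : i < k * t := by rwa [hkt, ← hlen x]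
    have hk : 0 < k := Nat.pos_of_mul_pos_right (Nat.zero_lt_of_lt hi21)
    refine ⟨((x, ⟨i / k, Nat.div_lt_of_lt_mul hi21⟩), ⟨i % k, Nat.mod_lt i hk⟩), ?_⟩
    simp only [Nat.div_add_mod, List.getD_eq_getElem _ _ hi]
  · simp [mul_assoc, mul_comm t, hkt]

theorem coveredBy_cycleEdges (hk : 1 < k) (hk21 : k ∣ 21) (hlen : ∀ x, (B x).length = 21)
    (hsurj : ∀ v, ∃ x, ∃ e ∈ B x, place d x e = v) :
    CoveredBy (fun u v => ∃ x, ∃ p ∈ cycleEdges k (B x), u = place d x p.1 ∧ v = place d x p.2)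
      {k} := by
  let φ := Equiv.ofBijective _ (bijective_place_getD (Nat.mul_div_cancel' hk21) hlen hsurj)
  have adj_succ (x : G) {j i : ℕ} (hj : j < 21 / k) (hi : i < k) :
      (((⊥ : SimpleGraph (G × Fin (21 / k))) □ cycleGraph k).map φ).Adj
        (place d x ((B x).getD (k * j + i) 0)) (place d x ((B x).getD (k * j + (i + 1) % k) 0)) :=
    (map_adj_apply (f := φ.toEmbedding)
      (a := ((x, ⟨j, hj⟩), ⟨i, hi⟩)) (b := ((x, ⟨j, hj⟩), ⟨(i + 1) % k, _⟩))).2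
      (boxProd_adj_right.2 (cycleGraph_adj_succ_mod hk hi))
  refine ⟨{_}, .cons (isCycleFactor_map_boxProd hk φ) .zero, ?_⟩
  rintro u v ⟨x, p, hp, rfl, rfl⟩
  refine ⟨_, Multiset.mem_singleton_self _, ?_⟩
  obtain ⟨j, hj, i, hi, rfl | rfl⟩ := mem_cycleEdges.1 hp
  · exact adj_succ x hj hi
  · exact (adj_succ x hj hi).symm

theorem coveredBy_developedEdges (hk : 1 < k) (hk21 : k ∣ 21) (hlen : ∀ x, (B x).length = 21)
    (hsurj : ∀ v, ∃ x, ∃ e ∈ B x, place d x e = v) (q : ℕ) :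
    CoveredBy
      (fun u v => ∃ x, ∃ p ∈ developedEdges k q (B x), u = place d x p.1 ∧ v = place d x p.2)
      ((21 / q) • {k}) := by
  have raised (g : ℕ) := coveredBy_cycleEdges (d := d) (B := fun x => (B x).map (raise (q * g)))
    hk hk21 (by simpa) fun v => by
      obtain ⟨x, e, he, hv⟩ := hsurj (v - (0, ((q * g : ℕ) : ZMod 21)))
      exact ⟨x, _, List.mem_map_of_mem he, by rw [place_raise, hv, sub_add_cancel]⟩
  have := CoveredBy.sum (List.range (21 / q)) fun g _ => raised g
  simp only [List.map_const', List.length_range, List.sum_replicate] at this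
  refine this.mono ?_
  rintro u v ⟨x, p, hp, hu, hv⟩
  obtain ⟨g, hg, hp⟩ := List.mem_flatMap.1 hp
  exact ⟨g, hg, x, p, hp, hu, hv⟩

theorem coveredBy_joins (hk : 1 < k) (hk21 : k ∣ 21) (hlen : ∀ x, (B x).length = 21)
    (hlevel : ∀ y, ∀ a < 21, ∃ o, a + 21 * o ∈ B (y - o • d)) {q : ℕ} {T : List (ℕ × ℕ)}
    (hT : ∀ y, ∀ p ∈ T, ∃ o, p ∈ edgesFrom o (developedEdges k q (B (y - o • d)))) :
    CoveredBy (Joins d T) ((21 / q) • {k}) := by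
  refine (coveredBy_developedEdges (d := d) hk hk21 hlen (fun v => ?_) q).mono ?_
  · obtain ⟨o, ho⟩ := hlevel v.1 v.2.val (ZMod.val_lt _)
    exact ⟨_, _, ho, by rw [place_val_add_mul, sub_add_cancel]⟩
  · rintro u v ⟨y, p, hp, rfl, rfl⟩
    obtain ⟨o, ho⟩ := hT y p hp
    exact ⟨_, _, mem_edgesFrom ho, (place_add_mul d _ _ _).symm, (place_add_mul d _ _ _).symm⟩

end Development

section Starters

/-- A base block of cycles of length `len` with vertices `points`. Placed at every column, it yields
a cycle factor, and its raisings by the multiples of `step` yield `21 / step` of them. -/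
structure Starter where
  len : ℕ
  step : ℕ
  points : List ℕ

namespace Starter

/-- Every level occurs exactly once among the points, so the placements partition the vertices. -/
def IsTransversal (S : Starter) : Prop :=
  1 < S.len ∧ S.len ∣ 21 ∧ S.points.length = 21 ∧ List.range 21 ⊆ S.points.map (· % 21)

instance (S : Starter) : Decidable S.IsTransversal := by
  unfold IsTransversal; infer_instance

/-- The edges covered by the factors of a starter, each with its left end in the base column.
Six offsets are enough for the starters below. -/
def edges (S : Starter) : List (ℕ × ℕ) :=
  (List.range 6).flatMap fun o => edgesFrom o (developedEdges S.len S.step S.points)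

/-- The cycle lengths of the factors of a starter. -/
def lengths (S : Starter) : Multiset ℕ := (21 / S.step) • {S.len}

end Starter

/-- A set of pairs as a natural number in binary, so that inclusions between long lists can be
decided by a single bitwise operation. -/
def mask (T : List (ℕ × ℕ)) : ℕ := T.foldr (fun p n => 2 ^ Nat.pair p.1 p.2 ||| n) 0

theorem testBit_mask {T : List (ℕ × ℕ)} {p : ℕ × ℕ} :
    (mask T).testBit (Nat.pair p.1 p.2) = true ↔ p ∈ T := by
  induction T with
  | nil => simp [mask]
  | cons p' T ih =>
    rw [mask, List.foldr_cons, Nat.testBit_or, Bool.or_eq_true, ← mask, ih, Nat.testBit_two_pow,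
      decide_eq_true_eq, Nat.pair_eq_pair, ← Prod.ext_iff, List.mem_cons, eq_comm]

theorem subset_of_mask_land_eq {T T' : List (ℕ × ℕ)} (h : mask T &&& mask T' = mask T) :
    T ⊆ T' := by
  intro p hp
  rw [← testBit_mask, ← h, Nat.testBit_and, Bool.and_eq_true] at hp
  exact testBit_mask.1 hp.2

variable {G : Type*} [AddCommGroup G] [Finite G]

theorem coveredBy_starter {d : G} {S : Starter} (hS : S.IsTransversal) :
    CoveredBy (Joins d S.edges) S.lengths := by
  obtain ⟨hlen, hlen21, hpoints, hlevels⟩ := hS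
  refine coveredBy_joins (B := fun _ => S.points) hlen hlen21 (fun _ => hpoints)
    (fun _ a ha => ?_) fun _ p hp => ?_
  · obtain ⟨e, he, rfl⟩ := List.mem_map.1 (hlevels (List.mem_range.2 ha))
    exact ⟨e / 21, by rwa [Nat.mod_add_div]⟩
  · exact (List.mem_flatMap.1 hp).imp fun _ ho => ho.2

/-- The factors of the starters in `L` cover the edges in `T`, and their cycle lengths form `K`. -/
def IsStarterSystem (L : List Starter) (T : List (ℕ × ℕ)) (K : Multiset ℕ) : Prop :=
  (∀ S ∈ L, S.IsTransversal) ∧ mask T &&& mask (L.flatMap Starter.edges) = mask T ∧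
    (L.map Starter.lengths).sum = K

instance (L : List Starter) (T : List (ℕ × ℕ)) (K : Multiset ℕ) :
    Decidable (IsStarterSystem L T K) := by
  unfold IsStarterSystem; infer_instance

theorem IsStarterSystem.coveredBy {L : List Starter} {T : List (ℕ × ℕ)} {K : Multiset ℕ}
    (h : IsStarterSystem L T K) (d : G) : CoveredBy (Joins d T) K := by
  obtain ⟨hL, hT, rfl⟩ := h
  refine (CoveredBy.sum L fun S hS => coveredBy_starter (d := d) (hL S hS)).mono ?_
  rintro u v ⟨x, p, hp, huv⟩
  obtain ⟨S, hS, hpS⟩ := List.mem_flatMap.1 (subset_of_mask_land_eq hT hp)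
  exact ⟨S, hS, x, p, hpS, huv⟩

end Starters

section Walks

/-- The pairs of states allowed at consecutive columns of a walk: the closed words `0 1 2`,
`0 3 4 5` and `0 6 7 8 9` can follow each other in any order, so there are closed walks of every
length from `3` on. -/
def transitions : List (ℕ × ℕ) :=
  [(0, 1), (1, 2), (2, 0), (0, 3), (3, 4), (4, 5), (5, 0), (0, 6), (6, 7), (7, 8), (8, 9), (9, 0)]

/-- The state at position `j` of a closed walk of length `k`: it begins with the word of length
`3 + k % 3` and continues with copies of `0 1 2`. -/
def closedWalk (k j : ℕ) : ℕ :=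
  if k % 3 = 1 ∧ 0 < j ∧ j < 4 then j + 2
  else if k % 3 = 2 ∧ 0 < j ∧ j < 5 then j + 5
  else (j - k % 3) % 3

theorem closedWalk_mem_transitions {k j : ℕ} (hk : 3 ≤ k) (hj : j < k) :
    (closedWalk k j, closedWalk k ((j + 1) % k)) ∈ transitions := by
  have succ_mod : (j + 1) % k = if j + 1 = k then 0 else j + 1 := by
    split_ifs with h
    · rw [h, Nat.mod_self]
    · exact Nat.mod_eq_of_lt (by lia)
  have mem_transitions (a b : ℕ) (ha : a < 10) (h : b = a + 1 ∧ a ≠ 2 ∧ a ≠ 5 ∧ a ≠ 9 ∨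
      b = 0 ∧ (a = 2 ∨ a = 5 ∨ a = 9) ∨ a = 0 ∧ (b = 3 ∨ b = 6)) : (a, b) ∈ transitions := by
    rcases h with ⟨rfl, h⟩ | ⟨rfl, rfl | rfl | rfl⟩ | ⟨rfl, rfl | rfl⟩
    · revert a; decide
    all_goals decide
  rw [succ_mod]
  apply mem_transitions <;> unfold closedWalk <;> split_ifs <;> omega

variable {G : Type*} [AddCommGroup G] [Finite G]

theorem exists_position_mod_addOrderOf (d : G) :
    ∃ pos : G → ℕ, ∀ x, pos x < addOrderOf d ∧ pos x = (pos (x - d) + 1) % addOrderOf d := by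
  classical
  let base (x : G) : G := (x : G ⧸ AddSubgroup.zmultiples d).out
  have exists_eq_base_add (x : G) : ∃ j < addOrderOf d, base x + j • d = x := by
    have hx : -base x + x ∈ AddSubgroup.zmultiples d := QuotientAddGroup.eq.1 (Quotient.out_eq _)
    obtain ⟨j, hj, hjx⟩ := Finset.mem_image.1 (mem_zmultiples_iff_mem_range_addOrderOf.1 hx)
    exact ⟨j, Finset.mem_range.1 hj, by rw [hjx, add_neg_cancel_left]⟩
  choose pos pos_lt base_add_pos using exists_eq_base_add
  refine ⟨pos, fun x => ⟨pos_lt x, ?_⟩⟩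
  have base_sub : base (x - d) = base x := congrArg Quotient.out (QuotientAddGroup.eq.2 (by simp))
  have step : base x + pos x • d = base x + (pos (x - d) + 1) • d := by
    rw [succ_nsmul, ← add_assoc, base_add_pos, ← base_sub, base_add_pos, sub_add_cancel]
  rw [← nsmul_inj_mod.1 (add_left_cancel step), Nat.mod_eq_of_lt (pos_lt x)]

variable {d : G}

theorem exists_walk (hd : 3 ≤ addOrderOf d) :
    ∃ w : G → ℕ, ∀ x, (w (x - d), w x) ∈ transitions := by
  obtain ⟨pos, hpos⟩ := exists_position_mod_addOrderOf d
  refine ⟨fun x => closedWalk (addOrderOf d) (pos x), fun x => ?_⟩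
  simp only [(hpos x).2]
  exact closedWalk_mem_transitions hd (hpos (x - d)).1

theorem coveredBy_walk (hd : 3 ≤ addOrderOf d) {k q : ℕ} (hk : 1 < k) (hk21 : k ∣ 21)
    {T : List (ℕ × ℕ)} (B : ℕ → List ℕ) (hlen : ∀ p ∈ transitions, (B p.2).length = 21)
    (hlevel : ∀ p ∈ transitions, ∀ p' ∈ transitions, p.2 = p'.1 → ∀ a < 21,
      a ∈ B p'.2 ∨ a + 21 ∈ B p.2 ∨ a + 42 ∈ B p.1)
    (hT : ∀ p ∈ transitions, mask T &&& mask (edgesFrom 0 (developedEdges k q (B p.2)) ++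
      edgesFrom 1 (developedEdges k q (B p.1))) = mask T) :
    CoveredBy (Joins d T) ((21 / q) • {k}) := by
  obtain ⟨w, hw⟩ := exists_walk hd
  refine coveredBy_joins (B := fun x => B (w x)) hk hk21 (fun x => hlen _ (hw x))
    (fun y a ha => ?_) fun y p hp => ?_
  · rcases hlevel _ (hw (y - d)) _ (hw y) rfl a ha with h | h | h
    · exact ⟨0, by simpa using h⟩
    · exact ⟨1, by simpa using h⟩
    · exact ⟨2, by simpa [two_smul, sub_sub] using h⟩
  · rcases List.mem_append.1 (subset_of_mask_land_eq (hT _ (hw y)) hp) with h | h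
    · exact ⟨0, by simpa using h⟩
    · exact ⟨1, by simpa using h⟩

end Walks

section StarterData

/-- The ordered pairs of levels. -/
def levelPairs : List (ℕ × ℕ) := List.range 21 ×ˢ List.range 21

/-- How many steps separate the columns of the ends of a cross edge between levels `a` and `b`; it
depends only on `±(b - a)` modulo `21`, and the list was found together with the starters. -/
def lag (a b : ℕ) : ℕ := if (b + 21 - a) % 21 ∈ [0, 2, 5, 7, 14, 16, 19] then 2 else 1

/-- One edge for each ordered pair of levels, from the base column to the column `lag` steps to its
right. -/
def crossEdges (P : List (ℕ × ℕ)) : List (ℕ × ℕ) := P.map fun p => (p.1, p.2 + 21 * lag p.1 p.2)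

/-- The pairs of levels that are congruent modulo `3`. -/
def congruentPairs : List (ℕ × ℕ) := levelPairs.filter fun p => p.1 % 3 = p.2 % 3

/-- The pairs of levels that are not congruent modulo `3`. -/
def incongruentPairs : List (ℕ × ℕ) := levelPairs.filter fun p => p.1 % 3 ≠ p.2 % 3

/-- The edges inside the base column. -/
def columnEdges : List (ℕ × ℕ) := levelPairs.filter fun p => p.1 ≠ p.2

/-- The raisings of a cycle by the multiples of `c`, as many as fill `21` points. -/
def translates (c : ℕ) (l : List ℕ) : List ℕ :=
  (List.range (21 / l.length)).flatMap fun j => l.map (raise (c * j))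

/-- The starter of the `7`-cycles that join levels with difference `c`, for `c` divisible by `3`. -/
def differenceHeptagons (c : ℕ) : Starter :=
  ⟨7, 21, translates 1 ((List.range 7).map fun i => c * i % 21)⟩

/-- The starter of the raisings of the triangle `l` by the multiples of `3`. -/
def translatedTriangles (l : List ℕ) : Starter := ⟨3, 21, translates 3 l⟩

/-- Entry `i` is a base block of triangles for the columns in state `i` of a walk. Blocks of
consecutive states fit together: in a column they meet every level once, and every level difference
occurs once, at the distance given by `lag`. All tables were found by computer search. -/
def triangleWalk : List (List ℕ) :=
  [[17, 29, 59, 8, 32, 52, 2, 31, 49, 9, 26, 58, 15, 37, 50, 11, 21, 48, 7, 22, 47],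
   [4, 40, 46, 20, 32, 43, 14, 36, 61, 13, 21, 62, 7, 24, 42, 17, 41, 54, 15, 25, 55],
   [9, 31, 51, 1, 39, 45, 18, 26, 44, 12, 27, 61, 13, 37, 48, 2, 35, 60, 14, 24, 54],
   [20, 23, 62, 7, 40, 51, 13, 30, 60, 4, 33, 53, 14, 36, 49, 15, 25, 52, 17, 32, 57],
   [13, 35, 55, 1, 34, 45, 20, 37, 46, 14, 24, 42, 0, 29, 56, 3, 27, 61, 18, 33, 58],
   [19, 22, 61, 0, 33, 44, 1, 39, 48, 2, 31, 51, 4, 26, 60, 17, 27, 54, 5, 41, 45],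
   [13, 35, 55, 4, 21, 48, 14, 22, 61, 17, 32, 45, 15, 39, 50, 7, 40, 44, 20, 30, 60],
   [13, 37, 55, 12, 22, 56, 15, 32, 62, 20, 21, 48, 2, 38, 58, 3, 36, 61, 4, 33, 44],
   [4, 28, 46, 14, 24, 58, 9, 26, 56, 20, 21, 48, 10, 25, 45, 5, 38, 42, 7, 36, 47],
   [18, 33, 60, 10, 34, 54, 1, 39, 48, 12, 22, 61, 9, 31, 44, 8, 41, 45, 11, 40, 51]]

/-- Entry `i` is a `7`-cycle for the columns in state `i` of a walk; all its levels are divisible by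
`3`, and the base block is completed by its raisings by `1` and `2`. -/
def heptagonWalk : List (List ℕ) :=
  [[60, 30, 0, 33, 6, 21, 18], [45, 30, 15, 21, 18, 36, 3], [48, 30, 12, 36, 3, 33, 6],
   [57, 21, 18, 36, 3, 30, 15], [45, 30, 6, 39, 12, 21, 3], [48, 30, 12, 36, 3, 33, 6],
   [57, 21, 18, 36, 3, 30, 15], [45, 21, 12, 24, 6, 30, 3], [54, 36, 6, 33, 18, 30, 12],
   [48, 30, 18, 24, 0, 36, 6]]

/-- A base block of three `7`-cycles whose edges join levels that are incongruent modulo `3`. -/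
def incongruentHeptagons : List ℕ :=
  [42, 5, 30, 62, 82, 24, 2, 56, 27, 58, 11, 55, 33, 73, 38, 7, 36, 71, 106, 102, 46]

/-- A base block and its mirror image, in which every edge runs in the opposite direction. -/
def heptagonStarters : List Starter :=
  [⟨7, 3, incongruentHeptagons⟩,
   ⟨7, 3, incongruentHeptagons.map fun e => 21 * (5 - e / 21) + e % 21⟩]

/-- Starters for seven factors of triangles and seven factors of `7`-cycles. -/
def halfTriangleStarters : List Starter :=
  ⟨7, 3, [42, 16, 60, 22, 44, 93, 71, 83, 36, 80, 24, 49, 12, 52, 26, 6, 40, 77, 88, 53, 13]⟩ ::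
    [[0, 32, 49], [1, 26, 57], [1, 33, 50], [2, 22, 42], [2, 27, 49], [2, 31, 60], [2, 36, 46]].map
      translatedTriangles

/-- Entry `i` consists of starters for `18 + i` factors of triangles, which also use edges inside
the columns, and for `6 - i` factors of `7`-cycles inside the columns. -/
def mixedStarters : List (List Starter) :=
  [[[42, 22, 2], [0, 1, 32], [21, 43, 17], [0, 25, 8], [42, 25, 14], [0, 7, 44], [42, 7, 5],
    [0, 49, 14], [21, 52, 8], [21, 10, 11], [0, 13, 2], [0, 34, 47], [21, 13, 62], [0, 58, 29],
    [0, 16, 38], [42, 16, 41], [0, 61, 56], [42, 19, 59]].map translatedTriangles ++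
   [[0, 11, 12, 16, 2, 19, 5, 15, 4, 6, 10, 17, 13, 20, 1, 18, 8, 9, 14, 7, 3],
    [0, 20, 16, 18, 7, 9, 19, 14, 15, 5, 13, 3, 2, 10, 6, 17, 12, 1, 8, 4, 11],
    [0, 4, 17, 18, 2, 12, 10, 19, 15, 13, 9, 20, 7, 11, 16, 6, 5, 1, 14, 3, 8]].map (⟨7, 21, ·⟩) ++
   [3, 6, 9].map differenceHeptagons,
   [[21, 1, 23], [0, 1, 11], [21, 43, 17], [42, 25, 5], [21, 25, 8], [21, 46, 11], [0, 49, 5],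
    [42, 7, 14], [0, 7, 41], [0, 10, 47], [21, 10, 59], [0, 31, 20], [0, 34, 44], [21, 13, 53],
    [0, 13, 14], [0, 58, 29], [42, 16, 41], [42, 19, 2], [0, 61, 56]].map translatedTriangles ++
   [[0, 16, 7, 19, 17, 5, 9, 12, 20, 8, 10, 15, 11, 3, 1, 6, 2, 4, 13, 18, 14],
    [0, 19, 11, 13, 1, 10, 12, 15, 2, 14, 5, 7, 20, 3, 4, 6, 18, 9, 17, 8, 16],
    [0, 8, 12, 7, 9, 4, 17, 1, 20, 11, 2, 10, 19, 3, 14, 16, 18, 5, 13, 15, 6]].map (⟨7, 21, ·⟩) ++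
   [3, 6].map differenceHeptagons,
   [[42, 22, 2], [0, 22, 44], [0, 1, 5], [0, 4, 2], [21, 4, 11], [0, 25, 14], [0, 49, 32],
    [42, 7, 41], [0, 10, 47], [21, 52, 17], [21, 10, 41], [21, 55, 8], [0, 13, 38], [21, 13, 62],
    [42, 16, 5], [0, 58, 29], [42, 58, 14], [0, 19, 11], [0, 61, 56],
    [42, 19, 59]].map translatedTriangles ++
   [[0, 6, 18, 4, 10, 16, 7, 2, 14, 20, 8, 17, 5, 11, 1, 13, 19, 12, 3, 9, 15],
    [0, 12, 6, 15, 2, 17, 9, 4, 13, 14, 8, 7, 1, 16, 18, 5, 20, 19, 10, 11, 3],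
    [0, 8, 2, 1, 10, 3, 15, 18, 12, 20, 11, 17, 16, 9, 5, 4, 19, 7, 13, 6, 14]].map (⟨7, 21, ·⟩) ++
   [differenceHeptagons 3]]

/-- Entry `r` consists of starters inside the columns, for `r` factors of triangles and `10 - r`
factors of `7`-cycles. -/
def columnStarters : List (List Starter) :=
  [⟨7, 3, incongruentHeptagons.map (· % 21)⟩ :: [3, 6, 9].map differenceHeptagons,
   [⟨3, 21, [0, 5, 17, 1, 6, 11, 2, 9, 16, 3, 7, 12, 4, 15, 20, 8, 13, 18, 10, 14, 19]⟩,
    ⟨7, 21, translates 7 [0, 9, 8, 3, 6, 18, 12]⟩,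
    ⟨7, 21, translates 7 [0, 15, 5, 18, 10, 20, 16]⟩,
    ⟨7, 21, translates 7 [0, 10, 6, 15, 19, 9, 18]⟩,
    ⟨7, 7, [0, 8, 15, 14, 17, 2, 13, 1, 4, 18, 19, 12, 6, 20, 3, 5, 10, 9, 7, 11, 16]⟩,
    ⟨7, 7, [0, 11, 15, 3, 17, 18, 20, 1, 16, 8, 10, 4, 2, 19, 5, 6, 9, 12, 14, 7, 13]⟩],
   [⟨3, 21, [0, 5, 8, 1, 14, 19, 2, 10, 13, 3, 6, 16, 4, 11, 18, 7, 12, 15, 9, 17, 20]⟩,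
    ⟨3, 21, [0, 15, 16, 1, 2, 7, 3, 10, 17, 4, 5, 20, 6, 11, 12, 8, 9, 14, 13, 18, 19]⟩,
    ⟨7, 21, translates 7 [0, 18, 12, 10, 8, 16, 20]⟩,
    ⟨7, 21, translates 7 [0, 10, 9, 15, 11, 20, 19]⟩,
    ⟨7, 7, [0, 2, 17, 14, 10, 4, 12, 1, 5, 9, 16, 19, 3, 11, 6, 8, 15, 20, 18, 7, 13]⟩,
    ⟨7, 7, [0, 9, 18, 17, 5, 15, 14, 1, 4, 2, 12, 19, 6, 10, 3, 8, 20, 7, 11, 16, 13]⟩],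
   [⟨3, 7, [0, 10, 17, 1, 3, 6, 2, 5, 9, 4, 11, 16, 7, 14, 15, 8, 12, 20, 13, 18, 19]⟩,
    ⟨7, 21, translates 7 [0, 3, 11, 9, 20, 1, 12]⟩,
    ⟨7, 7, [0, 16, 20, 10, 2, 14, 19, 1, 7, 11, 5, 8, 18, 17, 3, 12, 13, 4, 6, 9, 15]⟩,
    ⟨7, 7, [0, 2, 1, 8, 16, 17, 13, 3, 5, 10, 4, 12, 19, 9, 6, 7, 18, 15, 11, 14, 20]⟩],
   [⟨3, 21, [0, 9, 11, 1, 5, 10, 2, 4, 14, 3, 15, 19, 6, 13, 20, 7, 16, 18, 8, 12, 17]⟩,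
    ⟨3, 7, [0, 1, 12, 2, 15, 16, 3, 17, 20, 4, 5, 8, 6, 9, 18, 7, 10, 11, 13, 14, 19]⟩,
    ⟨7, 7, [0, 13, 5, 6, 11, 8, 14, 1, 17, 15, 4, 18, 10, 20, 2, 3, 16, 12, 19, 9, 7]⟩,
    ⟨7, 7, [0, 6, 15, 1, 14, 12, 10, 2, 8, 13, 11, 17, 5, 18, 3, 7, 4, 19, 16, 20, 9]⟩],
   [⟨3, 21, [0, 7, 14, 1, 4, 6, 2, 12, 17, 3, 9, 19, 5, 10, 16, 8, 11, 13, 15, 18, 20]⟩,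
    ⟨3, 21, [0, 4, 10, 1, 12, 16, 2, 8, 19, 3, 14, 18, 5, 9, 15, 6, 13, 20, 7, 11, 17]⟩,
    ⟨3, 7, [0, 12, 18, 1, 9, 11, 2, 6, 7, 3, 4, 8, 5, 13, 19, 10, 17, 20, 14, 15, 16]⟩,
    ⟨7, 21, translates 7 [0, 5, 18, 2, 3, 20, 8]⟩,
    ⟨7, 21, translates 7 [0, 13, 2, 11, 3, 1, 19]⟩,
    ⟨7, 7, [0, 3, 5, 17, 9, 12, 11, 1, 7, 13, 16, 2, 14, 10, 4, 18, 6, 8, 15, 19, 20]⟩],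
   [⟨3, 7, [0, 15, 18, 1, 17, 20, 2, 8, 13, 3, 7, 11, 4, 5, 14, 6, 9, 19, 10, 12, 16]⟩,
    ⟨3, 7, [0, 3, 19, 1, 8, 18, 2, 5, 11, 4, 9, 10, 6, 12, 13, 7, 15, 17, 14, 16, 20]⟩,
    ⟨7, 21, translates 7 [0, 16, 15, 12, 4, 3, 20]⟩,
    ⟨7, 7, [0, 5, 17, 10, 20, 8, 7, 1, 9, 16, 3, 15, 19, 12, 2, 4, 11, 13, 18, 6, 14]⟩],
   [⟨3, 21, [0, 12, 20, 1, 16, 18, 2, 4, 8, 3, 10, 17, 5, 13, 14, 6, 7, 19, 9, 11, 15]⟩,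
    ⟨3, 7, [0, 1, 15, 2, 7, 18, 3, 4, 5, 6, 10, 14, 8, 11, 13, 9, 12, 19, 16, 17, 20]⟩,
    ⟨3, 7, [0, 4, 7, 1, 19, 20, 2, 13, 16, 3, 12, 14, 5, 10, 15, 6, 11, 18, 8, 9, 17]⟩,
    ⟨7, 7, [0, 3, 9, 7, 16, 12, 8, 1, 11, 2, 15, 17, 6, 13, 4, 10, 18, 5, 20, 14, 19]⟩],
   [⟨3, 21, [0, 7, 14, 1, 8, 15, 2, 4, 13, 3, 10, 17, 5, 12, 19, 6, 16, 18, 9, 11, 20]⟩,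
    ⟨3, 21, [0, 10, 15, 1, 7, 17, 2, 9, 16, 3, 8, 14, 4, 5, 6, 11, 12, 13, 18, 19, 20]⟩,
    ⟨3, 7, [0, 6, 12, 1, 11, 14, 2, 15, 20, 3, 9, 13, 4, 17, 18, 5, 7, 16, 8, 10, 19]⟩,
    ⟨3, 7, [0, 1, 4, 2, 11, 19, 3, 7, 18, 5, 10, 13, 6, 8, 20, 9, 12, 15, 14, 16, 17]⟩,
    ⟨7, 21, translates 7 [0, 5, 11, 16, 15, 3, 20]⟩,
    ⟨7, 21, translates 7 [0, 13, 18, 1, 5, 3, 16]⟩],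
   [⟨3, 7, [0, 5, 6, 1, 12, 14, 2, 16, 20, 3, 8, 10, 4, 13, 17, 7, 9, 18, 11, 15, 19]⟩,
    ⟨3, 7, [0, 3, 12, 1, 7, 16, 2, 4, 15, 5, 8, 20, 6, 17, 19, 9, 10, 14, 11, 13, 18]⟩,
    ⟨3, 7, [0, 4, 7, 1, 15, 20, 2, 5, 12, 3, 18, 19, 6, 13, 14, 8, 9, 17, 10, 11, 16]⟩,
    ⟨7, 21, translates 7 [0, 1, 4, 19, 2, 13, 10]⟩],
   [⟨3, 21, [0, 5, 16, 1, 3, 4, 2, 7, 12, 6, 13, 20, 8, 10, 11, 9, 14, 19, 15, 17, 18]⟩,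
    ⟨3, 7, [0, 4, 10, 1, 2, 6, 3, 8, 20, 5, 14, 15, 7, 16, 18, 9, 12, 17, 11, 13, 19]⟩,
    ⟨3, 7, [0, 3, 7, 1, 14, 16, 2, 9, 20, 4, 8, 15, 5, 11, 12, 6, 17, 19, 10, 13, 18]⟩,
    ⟨3, 7, [0, 13, 15, 1, 10, 19, 2, 3, 17, 4, 9, 18, 5, 6, 7, 8, 12, 16, 11, 14, 20]⟩]]

theorem isStarterSystem_columnStarters : ∀ r < 11,
    IsStarterSystem (columnStarters.getD r []) columnEdges (r • {3} + (10 - r) • {7}) := by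
  decide +kernel

theorem isStarterSystem_mixedStarters : ∀ i < 3,
    IsStarterSystem (mixedStarters.getD i []) (columnEdges ++ crossEdges incongruentPairs)
      ((18 + i) • {3} + (6 - i) • {7}) := by
  decide +kernel

theorem isStarterSystem_heptagonStarters :
    IsStarterSystem heptagonStarters (crossEdges incongruentPairs) (14 • {7}) := by
  decide +kernel

theorem isStarterSystem_halfTriangleStarters :
    IsStarterSystem halfTriangleStarters (crossEdges incongruentPairs) (7 • {3} + 7 • {7}) := by
  decide +kernel

variable {G : Type*} [AddCommGroup G] [Finite G] {d : G}

theorem coveredBy_triangleWalk (hd : 3 ≤ addOrderOf d) :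
    CoveredBy (Joins d (crossEdges levelPairs)) (21 • {3}) :=
  coveredBy_walk hd (q := 1) (by simp) (by norm_num) (triangleWalk.getD · []) (by decide +kernel)
    (by decide +kernel) (by decide +kernel)

theorem coveredBy_heptagonWalk (hd : 3 ≤ addOrderOf d) :
    CoveredBy (Joins d (crossEdges congruentPairs)) (7 • {7}) :=
  coveredBy_walk hd (q := 3) (by simp) (by norm_num)
    (fun i => translates 1 (heptagonWalk.getD i [])) (by decide +kernel) (by decide +kernel)
    (by decide +kernel)

end StarterData

section Assembly

theorem crossEdges_levelPairs_subset :
    crossEdges levelPairs ⊆ crossEdges congruentPairs ++ crossEdges incongruentPairs := by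
  rw [crossEdges, crossEdges, crossEdges, ← List.map_append]
  refine List.map_subset _ fun p hp => List.mem_append.2 ?_
  by_cases h : p.1 % 3 = p.2 % 3
  · exact .inl (List.mem_filter.2 ⟨hp, decide_eq_true h⟩)
  · exact .inr (List.mem_filter.2 ⟨hp, decide_eq_true h⟩)

theorem lag_comm : ∀ a < 21, ∀ b < 21, lag a b = lag b a := by
  decide

variable {G : Type*} [AddCommGroup G]

theorem val_mem_levelPairs (a b : ZMod 21) : (a.val, b.val) ∈ levelPairs := by
  simp [levelPairs, List.mem_product, ZMod.val_lt]

theorem joins_columnEdges (d : G) {u v : Vertex G} (hcol : u.1 = v.1) (huv : u ≠ v) :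
    Joins d columnEdges u v := by
  have hlevel : u.2.val ≠ v.2.val := fun h => huv (Prod.ext hcol (ZMod.val_injective 21 h))
  refine ⟨u.1, (u.2.val, v.2.val),
    List.mem_filter.2 ⟨val_mem_levelPairs _ _, decide_eq_true hlevel⟩, ?_, ?_⟩
  · simpa using (place_val_add_mul d u.1 u.2 0).symm
  · simpa [hcol] using (place_val_add_mul d u.1 v.2 0).symm

theorem joins_crossEdges {d : G} {u v : Vertex G} (h : v.1 = u.1 + lag u.2.val v.2.val • d) :
    Joins d (crossEdges levelPairs) u v := by
  refine ⟨u.1, _, List.mem_map_of_mem (val_mem_levelPairs u.2 v.2), ?_, ?_⟩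
  · simpa using (place_val_add_mul d u.1 u.2 0).symm
  · rw [place_val_add_mul, ← h]

theorem exists_joins_crossEdges (hG : Odd (Nat.card G)) {u v : Vertex G} (hcol : u.1 ≠ v.1) :
    ∃ d ≠ 0, Joins d (crossEdges levelPairs) u v ∧ Joins (-d) (crossEdges levelPairs) v u := by
  have coprime : (Nat.card G).Coprime (lag u.2.val v.2.val) := by
    unfold lag
    split_ifs
    · exact hG.coprime_two_right
    · exact Nat.coprime_one_right _
  obtain ⟨d, hd⟩ := (nsmulCoprime coprime).surjective (v.1 - u.1)
  replace hd : lag u.2.val v.2.val • d = v.1 - u.1 := hd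
  refine ⟨d, ?_, joins_crossEdges ?_, joins_crossEdges ?_⟩
  · rintro rfl
    exact hcol (sub_eq_zero.1 (by rw [← hd, smul_zero])).symm
  · rw [hd, add_sub_cancel]
  · rw [lag_comm _ (ZMod.val_lt _) _ (ZMod.val_lt _), smul_neg, hd, neg_sub, add_sub_cancel]

theorem three_le_addOrderOf [Finite G] (hG : Odd (Nat.card G)) {d : G} (hd : d ≠ 0) :
    3 ≤ addOrderOf d := by
  have odd : Odd (addOrderOf d) := hG.of_dvd_nat (addOrderOf_dvd_natCard d)
  have ne_one : addOrderOf d ≠ 1 := fun h => hd (AddMonoid.addOrderOf_eq_one_iff.1 h)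
  obtain ⟨j, hj⟩ := odd
  lia

variable [Finite G]

theorem coveredBy_column {r s : ℕ} (hrs : r + s = 10) :
    CoveredBy (fun u v : Vertex G => u.1 = v.1 ∧ u ≠ v) (r • {3} + s • {7}) := by
  obtain rfl : s = 10 - r := by lia
  exact ((isStarterSystem_columnStarters r (by lia)).coveredBy 0).mono
    fun u v h => joins_columnEdges 0 h.1 h.2

theorem coveredBy_crossEdges_heptagons {d : G} (hd : 3 ≤ addOrderOf d) :
    CoveredBy (Joins d (crossEdges levelPairs)) (21 • {7}) := by
  simpa only [← add_smul, Nat.reduceAdd] using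
    coveredBy_joins_of_subset_append (coveredBy_heptagonWalk hd)
      (isStarterSystem_heptagonStarters.coveredBy d) crossEdges_levelPairs_subset

theorem coveredBy_crossEdges_seven_fourteen {d : G} (hd : 3 ≤ addOrderOf d) :
    CoveredBy (Joins d (crossEdges levelPairs)) (7 • {3} + 14 • {7}) := by
  simpa only [add_left_comm (7 • {7}) (7 • {3}), ← add_smul, Nat.reduceAdd] using
    coveredBy_joins_of_subset_append (coveredBy_heptagonWalk hd)
      (isStarterSystem_halfTriangleStarters.coveredBy d) crossEdges_levelPairs_subset

theorem coveredBy_column_or_crossEdges {d : G} (hd : 3 ≤ addOrderOf d) {r s : ℕ} (hr : 18 ≤ r)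
    (hr' : r < 21) (hrs : r + s = 31) :
    CoveredBy (fun u v => u.1 = v.1 ∧ u ≠ v ∨ Joins d (crossEdges levelPairs) u v)
      (r • {3} + s • {7}) := by
  obtain ⟨i, rfl⟩ := Nat.exists_eq_add_of_le hr
  have cover := coveredBy_joins_of_subset_append (coveredBy_heptagonWalk hd)
    ((isStarterSystem_mixedStarters i (by lia)).coveredBy d)
    (T := columnEdges ++ crossEdges levelPairs) (by
      have := crossEdges_levelPairs_subset
      grind)
  obtain rfl : s = 7 + (6 - i) := by lia
  rw [add_left_comm, ← add_smul] at cover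
  refine cover.mono ?_
  rintro u v (⟨hcol, huv⟩ | ⟨x, p, hp, huv⟩)
  · obtain ⟨x, p, hp, huv⟩ := joins_columnEdges d hcol huv
    exact ⟨x, p, List.mem_append_left _ hp, huv⟩
  · exact ⟨x, p, List.mem_append_right _ hp, huv⟩

theorem coveredBy_crossEdges_of_mem (l : List G) (hl : ∀ d ∈ l, 3 ≤ addOrderOf d) {t : ℕ}
    (ht : t ≤ l.length) :
    CoveredBy (fun u v => ∃ d ∈ l, Joins d (crossEdges levelPairs) u v)
      ((21 * t) • {3} + (21 * (l.length - t)) • {7}) := by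
  have triangles := CoveredBy.sum (l.take t) fun d hd =>
    coveredBy_triangleWalk (hl d (List.mem_of_mem_take hd))
  have heptagons := CoveredBy.sum (l.drop t) fun d hd =>
    coveredBy_crossEdges_heptagons (hl d (List.mem_of_mem_drop hd))
  have cover := triangles.add heptagons
  simp only [List.map_const', List.sum_replicate, List.length_take, List.length_drop,
    min_eq_left ht, smul_smul, mul_comm _ 21] at cover
  refine cover.mono ?_
  rintro u v ⟨d, hd, huv⟩
  rw [← List.take_append_drop t l, List.mem_append] at hd
  exact hd.imp (⟨d, ·, huv⟩) (⟨d, ·, huv⟩)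

theorem coveredBy_column_or_crossEdges_of_mem (l : List G) (hl : ∀ d ∈ l, 3 ≤ addOrderOf d)
    {r s : ℕ} (hrs : r + s = 21 * l.length + 10) :
    CoveredBy
      (fun u v => u.1 = v.1 ∧ u ≠ v ∨ ∃ d ∈ l, Joins d (crossEdges levelPairs) u v)
      (r • {3} + s • {7}) := by
  rcases le_or_gt (r % 21) 10 with hlow | hlow
  · convert (coveredBy_column (G := G) (r := r % 21) (s := 10 - r % 21) (by lia)).add_smul
      (coveredBy_crossEdges_of_mem l hl (t := r / 21) (by lia)) using 3 <;> lia
  obtain _ | ⟨d, l⟩ := l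
  · simp only [List.length_nil] at hrs
    lia
  rw [List.forall_mem_cons] at hl
  rw [List.length_cons] at hrs
  have rest := coveredBy_crossEdges_of_mem l hl.2 (t := r / 21) (by lia)
  simp only [List.mem_cons, exists_eq_or_imp, ← or_assoc]
  rcases lt_or_ge (r % 21) 18 with hmid | hhigh
  · convert ((coveredBy_column (r := r % 21 - 7) (s := 17 - r % 21) (by lia)).add_smul
      (coveredBy_crossEdges_seven_fourteen hl.1)).add_smul rest using 3 <;> lia
  · convert (coveredBy_column_or_crossEdges hl.1 hhigh (Nat.mod_lt r (by simp))
      (Nat.add_sub_of_le (by lia))).add_smul rest using 3 <;> lia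

theorem coveredBy_ne (hG : Odd (Nat.card G)) {l : List G} (hl : ∀ d ∈ l, d ≠ 0)
    (hhalf : ∀ d ≠ 0, d ∈ l ∨ -d ∈ l) {r s : ℕ} (hrs : r + s = 21 * l.length + 10) :
    CoveredBy (fun u v : Vertex G => u ≠ v) (r • {3} + s • {7}) := by
  refine (coveredBy_column_or_crossEdges_of_mem l
    (fun d hd => three_le_addOrderOf hG (hl d hd)) hrs).symm.mono fun u v huv => ?_
  by_cases hcol : u.1 = v.1
  · exact .inl (.inl ⟨hcol, huv⟩)
  obtain ⟨d, hd, hjoins, hjoins'⟩ := exists_joins_crossEdges hG hcol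
  exact (hhalf d hd).imp (fun h => .inr ⟨d, h, hjoins⟩) fun h => .inr ⟨-d, h, hjoins'⟩

theorem exists_list_mem_or_neg_mem (h : ℕ) : ∃ l : List (ZMod (2 * h + 1)),
    l.length = h ∧ (∀ d ∈ l, d ≠ 0) ∧ ∀ d ≠ 0, d ∈ l ∨ -d ∈ l := by
  refine ⟨(List.range' 1 h).map Nat.cast, by simp, fun d hd => ?_, fun d hd => ?_⟩
  · obtain ⟨i, hi, rfl⟩ := List.mem_map.1 hd
    rw [List.mem_range'_1] at hi
    rw [Ne, ZMod.natCast_eq_zero_iff]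
    exact Nat.not_dvd_of_pos_of_lt (by lia) (by lia)
  · have pos : d.val ≠ 0 := (ZMod.val_ne_zero d).2 hd
    have lt := d.val_lt
    have neg : (-d).val = 2 * h + 1 - d.val := by
      have := NeZero.mk hd
      exact ZMod.val_neg_of_ne_zero d
    have mem (e : ZMod (2 * h + 1)) (he : e.val ∈ List.range' 1 h) :
        e ∈ (List.range' 1 h).map Nat.cast :=
      List.mem_map.2 ⟨e.val, he, ZMod.natCast_zmod_val e⟩
    rcases le_or_gt d.val h with hle | hlt
    · exact .inl (mem d (List.mem_range'_1.2 (by lia)))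
    · exact .inr (mem (-d) (List.mem_range'_1.2 (by lia)))

theorem isCycleDecomp_three_seven {n r s : ℕ} (hn : n % 42 = 21) (hrs : r + s = (n - 1) / 2) :
    IsCycleDecomp (⊤ : SimpleGraph (Fin n)) 3 7 r s := by
  obtain ⟨h, rfl⟩ : ∃ h, n = (2 * h + 1) * 21 := ⟨n / 42, by lia⟩
  obtain ⟨l, hlen, hl, hhalf⟩ := exists_list_mem_or_neg_mem h
  have odd : Odd (Nat.card (ZMod (2 * h + 1))) := by simp
  let φ : Fin ((2 * h + 1) * 21) ≃ Vertex (ZMod (2 * h + 1)) :=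
    Fintype.equivOfCardEq (by simp [ZMod.card])
  refine CoveredBy.isCycleDecomp (by simp) (by simp) (by rw [Fintype.card_fin]; lia) ?_
  exact ((coveredBy_ne odd hl hhalf (r := r) (s := s) (by lia)).comap φ).mono
    fun u v huv => φ.injective.ne huv

end Assembly

theorem HW_main_general (n r s : ℕ) (hn : n % 2 = 1) (hrs : r + s = (n - 1) / 2) :
    (r * s ≠ 0 → IsCycleDecomp (⊤ : SimpleGraph (Fin n)) 3 7 r s → n % 42 = 21) ∧
    (n % 42 = 21 → IsCycleDecomp (⊤ : SimpleGraph (Fin n)) 3 7 r s) := by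
  refine ⟨fun hrs0 h => ?_, fun h => isCycleDecomp_three_seven h hrs⟩
  obtain ⟨hr, hs⟩ := mul_ne_zero_iff.1 hrs0
  have := h.dvd_card hr hs
  rw [Nat.card_fin] at this
  lia

/-- Theorem 1.3 (main theorem): let `n ≡ 1 (mod 2)` and let `r, s` be nonnegative integers
with `rs ≠ 0` and `r + s = (n-1)/2`.  Then an `HW(n; r, s; 3, 7)` exists if and only if
`n ≡ 21 (mod 42)`, except possibly when `n = 21` and `r ∈ {2, 4, 6}`: if an
`HW(n; r, s; 3, 7)` exists then `n ≡ 21 (mod 42)`, and conversely if `n ≡ 21 (mod 42)` and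
either `n > 21` or (`n = 21` and `r ∉ {2, 4, 6}`), then an `HW(n; r, s; 3, 7)` exists. -/
theorem HW_main (n r s : ℕ) (hn : n % 2 = 1) (hrs0 : r * s ≠ 0)
    (hrs : r + s = (n - 1) / 2) :
    (IsCycleDecomp (⊤ : SimpleGraph (Fin n)) 3 7 r s → n % 42 = 21) ∧
    (n % 42 = 21 → (21 < n ∨ (n = 21 ∧ r ∉ ({2, 4, 6} : Set ℕ))) →
      IsCycleDecomp (⊤ : SimpleGraph (Fin n)) 3 7 r s) :=
  (HW_main_general n r s hn hrs).imp (fun h => h hrs0) fun h hmod _ => h hmod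
end

section
/- For every n ≡ 21 (mod 42) with n > 21 and all positive integers r, s with r + s = (n−1)/2, there exists an HW(n; r, s; 3, 7), i.e., a decomposition of K_n into r C₃-factors and s C₇-factors. -/
open SimpleGraph

/-!
Take a Kirkman triple system on `n / 7 = 6 t + 3` points, with its `3 t + 1` parallel classes, and
replace every point by seven points. A triangle of a class becomes `C₃[7] = K_{7,7,7}`, which splits
into `7 - sᵢ` triangle factors and `sᵢ` heptagon factors for each `sᵢ ∈ {0, 2, 3, 6, 7}`; in one
distinguished class it becomes `K₂₁` instead, so that the seven copies of each point get joined too,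
and `K₂₁` splits into `10 - s₀` and `s₀` factors for each `s₀ ∈ {0, 1, 10}`. When `t ≥ 1`, sums of
such numbers reach every `s ≤ 21 t + 10`.

Kirkman triple systems of all orders `6 n + 3` come from induction on `n`. Small systems are
developed over cyclic groups. For larger `n`, Wilson's construction puts Kirkman frames of type
`6⁴`, `6⁵` or `6⁶` on the blocks of a truncated transversal design, and every group of the resulting
frame is filled, through three new points, with a smaller Kirkman triple system.

A cycle factor is represented by an orientation, that is by a map whose orbits are the cycles, so
that a decomposition is a family of maps and small cases can be checked by evaluation.
-/

/-! ### Holey factorizations into cycles -/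

theorem eqOn_iterate {X : Type*} {f g : X → X} {s : Set X} (hfg : s.EqOn f g) (hg : s.MapsTo g s)
    (m : ℕ) : s.EqOn f^[m] g^[m] := by
  induction m with
  | zero => exact fun _ _ => rfl
  | succ m ih =>
    intro x hx
    rw [Function.iterate_succ_apply, Function.iterate_succ_apply, hfg hx, ih (hg hx)]

/-- An orientation of a decomposition of `G` into (holey) `2`-factors: each edge of `G` is traversed
by exactly one of the maps `σ i`, and `σ i` moves every vertex off its hole along a cycle of length
dividing `k i`, fixing the vertices in the hole. For a prime `k i` the cycles have length `k i`. -/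
structure IsHoleyFactorization {X I : Type*} (G : SimpleGraph X) (hole : I → X → Prop)
    (k : I → ℕ) (σ : I → X → X) : Prop where
  iterate_eq : ∀ i x, (σ i)^[k i] x = x
  apply_eq_self_iff : ∀ i x, σ i x = x ↔ hole i x
  adj_apply : ∀ i x, ¬hole i x → G.Adj x (σ i x)
  existsUnique : ∀ x y, G.Adj x y → ∃! i, σ i x = y ∨ σ i y = x

/-- An `IsHoleyFactorization` all of whose holes are empty. -/
abbrev IsFactorization {X I : Type*} (G : SimpleGraph X) (k : I → ℕ) (σ : I → X → X) : Prop :=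
  IsHoleyFactorization G (fun _ _ => False) k σ

namespace IsHoleyFactorization

variable {X Y I J : Type*} {G : SimpleGraph X} {hole : I → X → Prop} {k : I → ℕ} {σ : I → X → X}

theorem not_hole_apply (h : IsHoleyFactorization G hole k σ) {i : I} (hk : k i ≠ 0) {x : X}
    (hx : ¬hole i x) : ¬hole i (σ i x) := by
  intro hole_apply
  have fixed : σ i (σ i x) = σ i x := (h.apply_eq_self_iff i _).2 hole_apply
  refine hx ((h.apply_eq_self_iff i x).1 ?_)
  obtain ⟨m, hm⟩ := Nat.exists_eq_succ_of_ne_zero hk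
  have := h.iterate_eq i x
  rwa [hm, Function.iterate_succ_apply, Function.iterate_fixed fixed] at this

theorem ne_of_not_hole (h : IsHoleyFactorization G hole k σ) {i : I} {x : X} (hx : ¬hole i x) :
    σ i x ≠ x :=
  fun heq => hx ((h.apply_eq_self_iff i x).1 heq)

/-- The maps `σ` carried along embeddings of the points and of the indices. They fix the new points,
and new indices give the identity. -/
noncomputable def extendMap (e : X ↪ Y) (f : I ↪ J) (σ : I → X → X) : J → Y → Y :=
  Function.extend f (fun i => Function.extend e (e ∘ σ i) id) (fun _ => id)

/-- The holes of `extendMap`: the old holes, together with everything that is new. -/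
def extendHole (e : X ↪ Y) (f : I ↪ J) (hole : I → X → Prop) (j : J) (y : Y) : Prop :=
  ∀ i x, f i = j → e x = y → hole i x

section Extend

variable (e : X ↪ Y) (f : I ↪ J)

theorem extendMap_apply (σ : I → X → X) (i : I) (x : X) :
    extendMap e f σ (f i) (e x) = e (σ i x) := by
  rw [extendMap, f.injective.extend_apply, e.injective.extend_apply, Function.comp_apply]

theorem extendMap_eq_self (σ : I → X → X) {j : J} {y : Y} (h : ¬∃ i x, f i = j ∧ e x = y) :
    extendMap e f σ j y = y := by
  by_cases hj : ∃ i, f i = j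
  · obtain ⟨i, rfl⟩ := hj
    rw [extendMap, f.injective.extend_apply,
      Function.extend_apply' _ _ _ fun ⟨x, hx⟩ => h ⟨i, x, rfl, hx⟩, id]
  · rw [extendMap, Function.extend_apply' _ _ _ hj, id]

theorem iterate_extendMap (σ : I → X → X) (i : I) (x : X) (m : ℕ) :
    (extendMap e f σ (f i))^[m] (e x) = e ((σ i)^[m] x) := by
  have semiconj : Function.Semiconj e (σ i) (extendMap e f σ (f i)) :=
    fun z => (extendMap_apply e f σ i z).symm
  exact (semiconj.iterate_right m x).symm

theorem extendMap_apply_eq_iff (σ : I → X → X) {x y : X} (hxy : x ≠ y) (j : J) :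
    extendMap e f σ j (e x) = e y ↔ ∃ i, f i = j ∧ σ i x = y := by
  constructor
  · intro h
    by_cases hj : ∃ i, f i = j
    · obtain ⟨i, rfl⟩ := hj
      exact ⟨i, rfl, e.injective (by rw [← h, extendMap_apply])⟩
    · rw [extendMap_eq_self e f σ fun ⟨i, _, hi, _⟩ => hj ⟨i, hi⟩] at h
      exact absurd (e.injective h) hxy
  · rintro ⟨i, rfl, rfl⟩
    exact extendMap_apply e f σ i x

theorem extendHole_apply (i : I) (x : X) : extendHole e f hole (f i) (e x) ↔ hole i x := by
  simp only [extendHole, f.apply_eq_iff_eq, e.apply_eq_iff_eq]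
  exact ⟨fun h => h i x rfl rfl, by rintro h _ _ rfl rfl; exact h⟩

theorem extend (h : IsHoleyFactorization G hole k σ) {k' : J → ℕ} (hk : ∀ i, k' (f i) = k i) :
    IsHoleyFactorization (G.map e) (extendHole e f hole) k' (extendMap e f σ) where
  iterate_eq j y := by
    by_cases hjy : ∃ i x, f i = j ∧ e x = y
    · obtain ⟨i, x, rfl, rfl⟩ := hjy
      rw [hk, iterate_extendMap, h.iterate_eq]
    · exact Function.iterate_fixed (extendMap_eq_self e f σ hjy) _
  apply_eq_self_iff j y := by
    by_cases hjy : ∃ i x, f i = j ∧ e x = y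
    · obtain ⟨i, x, rfl, rfl⟩ := hjy
      rw [extendMap_apply, e.apply_eq_iff_eq, h.apply_eq_self_iff, extendHole_apply]
    · exact iff_of_true (extendMap_eq_self e f σ hjy) fun i x hi hx => (hjy ⟨i, x, hi, hx⟩).elim
  adj_apply j y hjy := by
    simp only [extendHole, not_forall] at hjy
    obtain ⟨i, x, rfl, rfl, hx⟩ := hjy
    rw [extendMap_apply]
    exact (SimpleGraph.map_adj_apply ..).2 (h.adj_apply i x hx)
  existsUnique := by
    rintro _ _ ⟨-, x, y, hxy, rfl, rfl⟩
    obtain ⟨i, hi, unique⟩ := h.existsUnique x y hxy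
    simp only [extendMap_apply_eq_iff e f σ hxy.ne, extendMap_apply_eq_iff e f σ hxy.ne']
    refine ⟨f i, hi.imp (⟨i, rfl, ·⟩) (⟨i, rfl, ·⟩), ?_⟩
    rintro _ (⟨i', rfl, h'⟩ | ⟨i', rfl, h'⟩)
    · exact congrArg f (unique i' (.inl h'))
    · exact congrArg f (unique i' (.inr h'))

end Extend

theorem transport (h : IsHoleyFactorization G hole k σ) (e : X ≃ Y) (f : I ≃ J)
    {G' : SimpleGraph Y} {hole' : J → Y → Prop} {k' : J → ℕ}
    (hG : ∀ x y, G'.Adj (e x) (e y) ↔ G.Adj x y) (hhole : ∀ i x, hole' (f i) (e x) ↔ hole i x)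
    (hk : ∀ i, k' (f i) = k i) :
    IsHoleyFactorization G' hole' k' (extendMap e.toEmbedding f.toEmbedding σ) := by
  have graph_eq : G.map e.toEmbedding = G' := by
    ext y z
    obtain ⟨x, rfl⟩ := e.surjective y
    obtain ⟨w, rfl⟩ := e.surjective z
    exact (SimpleGraph.map_adj_apply (f := e.toEmbedding) ..).trans (hG x w).symm
  have hole_eq : extendHole e.toEmbedding f.toEmbedding hole = hole' := by
    ext j y
    obtain ⟨i, rfl⟩ := f.surjective j
    obtain ⟨x, rfl⟩ := e.surjective y
    exact (extendHole_apply e.toEmbedding f.toEmbedding i x).trans (hhole i x).symm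
  exact graph_eq ▸ hole_eq ▸ h.extend e.toEmbedding f.toEmbedding hk

section Glue

variable {Λ : Type*} {G : Λ → SimpleGraph X} {hole : Λ → I → X → Prop} {σ : Λ → I → X → X}

open Classical in
/-- The union of the maps `σ l`, each restricted to the complement of its hole. -/
noncomputable def glueMap (hole : Λ → I → X → Prop) (σ : Λ → I → X → X) (i : I) (x : X) : X :=
  if hx : ∃ l, ¬hole l i x then σ hx.choose i x else x

theorem glueMap_of_hole {i : I} {x : X} (hx : ∀ l, hole l i x) : glueMap hole σ i x = x :=
  dif_neg fun ⟨l, hl⟩ => hl (hx l)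

theorem glueMap_of_not_hole
    (disjoint : ∀ i x l l', ¬hole l i x → ¬hole l' i x → l = l') {l : Λ} {i : I} {x : X}
    (hx : ¬hole l i x) : glueMap hole σ i x = σ l i x := by
  have hex : ∃ l, ¬hole l i x := ⟨l, hx⟩
  rw [glueMap, dif_pos hex, disjoint i x _ l hex.choose_spec hx]

theorem glueMap_apply_eq_iff
    (disjoint : ∀ i x l l', ¬hole l i x → ¬hole l' i x → l = l') {i : I} {x y : X} (hxy : x ≠ y) :
    glueMap hole σ i x = y ↔ ∃ l, ¬hole l i x ∧ σ l i x = y := by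
  refine ⟨fun hy => ?_, fun ⟨l, hl, hy⟩ => (glueMap_of_not_hole disjoint hl).trans hy⟩
  obtain ⟨l, hl⟩ : ∃ l, ¬hole l i x := by
    by_contra! hx
    exact hxy ((glueMap_of_hole hx).symm.trans hy)
  exact ⟨l, hl, (glueMap_of_not_hole disjoint hl).symm.trans hy⟩

theorem glueMap_joins_iff (h : ∀ l, IsHoleyFactorization (G l) (hole l) k (σ l))
    (disjoint : ∀ i x l l', ¬hole l i x → ¬hole l' i x → l = l')
    (adj_unique : ∀ x y l l', (G l).Adj x y → (G l').Adj x y → l = l') {l : Λ} {x y : X}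
    (hxy : (G l).Adj x y) (i : I) :
    (glueMap hole σ i x = y ∨ glueMap hole σ i y = x) ↔ (σ l i x = y ∨ σ l i y = x) := by
  have glueMap_eq_iff {x y : X} (hxy : (G l).Adj x y) : glueMap hole σ i x = y ↔ σ l i x = y := by
    rw [glueMap_apply_eq_iff disjoint hxy.ne]
    constructor
    · rintro ⟨l', hl', rfl⟩
      rw [adj_unique _ _ _ _ hxy ((h l').adj_apply i x hl')]
    · rintro rfl
      exact ⟨l, fun hx => hxy.ne (((h l).apply_eq_self_iff i x).2 hx).symm, rfl⟩
  rw [glueMap_eq_iff hxy, glueMap_eq_iff hxy.symm]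

theorem glue (h : ∀ l, IsHoleyFactorization (G l) (hole l) k (σ l)) (hk : ∀ i, k i ≠ 0)
    (disjoint : ∀ i x l l', ¬hole l i x → ¬hole l' i x → l = l')
    (adj_unique : ∀ x y l l', (G l).Adj x y → (G l').Adj x y → l = l') :
    IsHoleyFactorization (⨆ l, G l) (fun i x => ∀ l, hole l i x) k (glueMap hole σ) where
  iterate_eq i x := by
    by_cases! hx : ∀ l, hole l i x
    · exact Function.iterate_fixed (glueMap_of_hole hx) _
    · obtain ⟨l, hl⟩ := hx
      have eqOn : Set.EqOn (glueMap hole σ i) (σ l i) {x | ¬hole l i x} :=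
        fun _ => glueMap_of_not_hole disjoint
      rw [eqOn_iterate eqOn (fun _ => (h l).not_hole_apply (hk i)) _ hl, (h l).iterate_eq]
  apply_eq_self_iff i x := by
    refine ⟨fun hx l => by_contra fun hl => ?_, glueMap_of_hole⟩
    exact (h l).ne_of_not_hole hl ((glueMap_of_not_hole disjoint hl).symm.trans hx)
  adj_apply i x hx := by
    obtain ⟨l, hl⟩ := not_forall.1 hx
    rw [glueMap_of_not_hole disjoint hl]
    exact SimpleGraph.iSup_adj.2 ⟨l, (h l).adj_apply i x hl⟩
  existsUnique x y hxy := by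
    obtain ⟨l, hl⟩ := SimpleGraph.iSup_adj.1 hxy
    simpa only [glueMap_joins_iff h disjoint adj_unique hl] using (h l).existsUnique x y hl

end Glue

theorem exists_glue_extend {Λ : Type*} {Z L : Λ → Type*} {G : ∀ l, SimpleGraph (Z l)}
    {hole : ∀ l, L l → Z l → Prop} {k : ∀ l, L l → ℕ} {σ : ∀ l, L l → Z l → Z l}
    (h : ∀ l, IsHoleyFactorization (G l) (hole l) (k l) (σ l)) (e : ∀ l, Z l ↪ Y)
    (f : ∀ l, L l ↪ J) {G' : SimpleGraph Y} {hole' : J → Y → Prop} {k' : J → ℕ}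
    (hk : ∀ l i, k' (f l i) = k l i) (hk' : ∀ j, k' j ≠ 0)
    (adj_iff : ∀ x y, G'.Adj x y ↔ ∃ l a b, (G l).Adj a b ∧ e l a = x ∧ e l b = y)
    (not_hole_iff : ∀ j x, ¬hole' j x ↔ ∃ l i a, f l i = j ∧ e l a = x ∧ ¬hole l i a)
    (adj_unique : ∀ l l' a b a' b', (G l).Adj a b → (G l').Adj a' b' →
      e l a = e l' a' → e l b = e l' b' → l = l')
    (not_hole_unique : ∀ l l' i a i' a', ¬hole l i a → ¬hole l' i' a' →
      f l i = f l' i' → e l a = e l' a' → l = l') :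
    ∃ τ, IsHoleyFactorization G' hole' k' τ := by
  have graph_eq : ⨆ l, (G l).map (e l) = G' := by
    ext x y
    simp only [SimpleGraph.iSup_adj, SimpleGraph.map_adj, adj_iff]
  have hole_eq : (fun j x => ∀ l, extendHole (e l) (f l) (hole l) j x) = hole' := by
    ext j x
    rw [← not_iff_not, not_hole_iff]
    simp only [extendHole, not_forall, exists_prop]
  subst graph_eq hole_eq
  refine ⟨_, glue (fun l => (h l).extend (e l) (f l) (hk l)) hk' ?_ ?_⟩
  · intro j x l l' hl hl'
    simp only [extendHole, not_forall, exists_prop] at hl hl'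
    obtain ⟨i, a, rfl, rfl, hia⟩ := hl
    obtain ⟨i', a', hi', ha', hia'⟩ := hl'
    exact not_hole_unique l l' i a i' a' hia hia' hi'.symm ha'.symm
  · rintro _ _ l l' ⟨-, a, b, hab, rfl, rfl⟩ ⟨-, a', b', hab', ha', hb'⟩
    exact adj_unique l l' a b a' b' hab hab' ha'.symm hb'.symm

end IsHoleyFactorization

/-! ### Local criterion and development over a group -/

namespace IsHoleyFactorization

variable {X I : Type*} {G : SimpleGraph X} {hole : I → X → Prop} {k : I → ℕ} {σ : I → X → X}

/-- The neighbours of `x` on the cycles through `x`, counted with multiplicity. -/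
def cycleNeighbors [Fintype I] (hole : I → X → Prop) [∀ i x, Decidable (hole i x)] (k : I → ℕ)
    (σ : I → X → X) (x : X) : Multiset X :=
  Finset.univ.val.bind fun i => if hole i x then 0 else {σ i x, (σ i)^[k i - 1] x}

theorem mem_cycleNeighbors [Fintype I] [∀ i x, Decidable (hole i x)] {x y : X} :
    y ∈ cycleNeighbors hole k σ x ↔ ∃ i, ¬hole i x ∧ (y = σ i x ∨ y = (σ i)^[k i - 1] x) := by
  simp only [cycleNeighbors, Multiset.mem_bind, Finset.mem_val, Finset.mem_univ, true_and]
  refine exists_congr fun i => ?_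
  split_ifs with hx <;> simp [hx]

section

variable [Fintype X] [Fintype I] [DecidableRel G.Adj] [∀ i x, Decidable (hole i x)]

/-- The part of `IsHoleyFactorization` that concerns the cycles through one vertex `x`. -/
structure IsLocalAt (G : SimpleGraph X) (hole : I → X → Prop) (k : I → ℕ) (σ : I → X → X)
    [DecidableRel G.Adj] [∀ i x, Decidable (hole i x)] (x : X) : Prop where
  iterate_eq : ∀ i, (σ i)^[k i] x = x
  apply_eq_self_iff : ∀ i, σ i x = x ↔ hole i x
  cycleNeighbors_eq : cycleNeighbors hole k σ x = (Finset.univ.filter (G.Adj x)).val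

instance [DecidableEq X] (x : X) : Decidable (IsLocalAt G hole k σ x) :=
  decidable_of_iff ((∀ i, (σ i)^[k i] x = x) ∧ (∀ i, σ i x = x ↔ hole i x) ∧
      cycleNeighbors hole k σ x = (Finset.univ.filter (G.Adj x)).val)
    ⟨fun ⟨h₁, h₂, h₃⟩ => ⟨h₁, h₂, h₃⟩, fun ⟨h₁, h₂, h₃⟩ => ⟨h₁, h₂, h₃⟩⟩

namespace IsLocalAt

theorem adj_iff {x : X} (h : IsLocalAt G hole k σ x) {y : X} :
    G.Adj x y ↔ ∃ i, ¬hole i x ∧ (y = σ i x ∨ y = (σ i)^[k i - 1] x) := by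
  rw [← mem_cycleNeighbors, h.cycleNeighbors_eq]
  simp

theorem index_unique {x : X} (h : IsLocalAt G hole k σ x) {i i' : I} {y : X} (hi : ¬hole i x)
    (hi' : ¬hole i' x) (hy : y = σ i x ∨ y = (σ i)^[k i - 1] x)
    (hy' : y = σ i' x ∨ y = (σ i')^[k i' - 1] x) : i = i' := by
  have nodup : (cycleNeighbors hole k σ x).Nodup := h.cycleNeighbors_eq ▸ Finset.nodup _
  by_contra hne
  have disjoint := (Multiset.nodup_bind.1 nodup).2.forall (Finset.mem_univ_val i)
    (Finset.mem_univ_val i') hne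
  refine Multiset.disjoint_left.1 disjoint (?_ : y ∈ _) ?_
  · simpa [hi] using hy
  · simpa [hi'] using hy'

theorem apply_equiv {x : X} (h : IsLocalAt G hole k σ x) (e : X ≃ X) (f : I ≃ I)
    (hG : ∀ x y, G.Adj (e x) (e y) ↔ G.Adj x y) (hhole : ∀ i x, hole (f i) (e x) ↔ hole i x)
    (hk : ∀ i, k (f i) = k i) (hσ : ∀ i x, σ (f i) (e x) = e (σ i x)) :
    IsLocalAt G hole k σ (e x) := by
  have iterate_map (i : I) (m : ℕ) (x : X) : (σ (f i))^[m] (e x) = e ((σ i)^[m] x) := by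
    have semiconj : Function.Semiconj e (σ i) (σ (f i)) := fun z => (hσ i z).symm
    exact (semiconj.iterate_right m x).symm
  refine ⟨f.surjective.forall.2 fun i => ?_, f.surjective.forall.2 fun i => ?_, ?_⟩
  · rw [hk, iterate_map, h.iterate_eq]
  · rw [hσ, e.apply_eq_iff_eq, h.apply_eq_self_iff, hhole]
  · have filter_eq : Finset.univ.filter (G.Adj (e x)) =
        (Finset.univ.filter (G.Adj x)).map e.toEmbedding := by
      ext y
      obtain ⟨y, rfl⟩ := e.surjective y
      simp [hG]
    have cycleNeighbors_map : cycleNeighbors hole k σ (e x) =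
        (cycleNeighbors hole k σ x).map e := by
      rw [cycleNeighbors, ← Multiset.map_univ_val_equiv f, Multiset.bind_map, cycleNeighbors,
        Multiset.map_bind]
      refine Multiset.bind_congr fun i _ => ?_
      simp only [hhole, hk, hσ, iterate_map]
      split_ifs <;> simp
    rw [cycleNeighbors_map, filter_eq, Finset.map_val, h.cycleNeighbors_eq, Equiv.coe_toEmbedding]

end IsLocalAt

theorem of_isLocalAt (hk : ∀ i, k i ≠ 0) (h : ∀ x, IsLocalAt G hole k σ x) :
    IsHoleyFactorization G hole k σ := by
  have iterate_pred_eq (i : I) (x y : X) : y = (σ i)^[k i - 1] x ↔ σ i y = x := by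
    have succ_eq : k i - 1 + 1 = k i := Nat.succ_pred_eq_of_ne_zero (hk i)
    constructor
    · rintro rfl
      rw [← Function.iterate_succ_apply' (σ i), Nat.succ_eq_add_one, succ_eq, (h x).iterate_eq]
    · rintro rfl
      rw [← Function.iterate_succ_apply (σ i), Nat.succ_eq_add_one, succ_eq, (h y).iterate_eq]
  refine ⟨fun i x => (h x).iterate_eq i, fun i x => (h x).apply_eq_self_iff i,
    fun i x hx => (h x).adj_iff.2 ⟨i, hx, .inl rfl⟩, fun x y hxy => ?_⟩
  have not_hole_of_joins (i : I) (hi : σ i x = y ∨ σ i y = x) : ¬hole i x := fun hx => by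
    have hix := ((h x).apply_eq_self_iff i).2 hx
    rcases hi with hi | hi
    · exact hxy.ne (hix ▸ hi)
    · have hy := (iterate_pred_eq i x y).2 hi
      exact hxy.ne (hy.trans (Function.iterate_fixed hix _)).symm
  have joins_iff (i : I) :
      (y = σ i x ∨ y = (σ i)^[k i - 1] x) ↔ (σ i x = y ∨ σ i y = x) := by
    rw [iterate_pred_eq, eq_comm]
  obtain ⟨i, hix, hi⟩ := (h x).adj_iff.1 hxy
  refine ⟨i, (joins_iff i).1 hi, fun i' hi' => ?_⟩
  exact (h x).index_unique (not_hole_of_joins i' hi') hix ((joins_iff i').2 hi') hi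

end

end IsHoleyFactorization

/-- The map that moves each point one step along its cycle in a list of disjoint cycles. -/
def cyclesMap {X : Type*} [DecidableEq X] (cycles : List (List X)) (x : X) : X :=
  match cycles.find? (x ∈ ·) with
  | some cycle => cycle.nextOr x (cycle.headD x)
  | none => x

section Develop

variable {A B C P : Type*} [AddGroup A]

/-- The maps on `A × P` obtained by developing over the group `A` the base maps `β b`, each of which
has a translate for every element of `A`, and the invariant maps given by voltages: `γ c` sends
`(x, p)` to `(x + a, q)` where `γ c p = (a, q)`. -/
def develop (β : B → A × P → A × P) (γ : C → P → A × P) : (A × B) ⊕ C → A × P → A × P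
  | .inl (a, b), (x, p) => (a + (β b (-a + x, p)).1, (β b (-a + x, p)).2)
  | .inr c, (x, p) => (x + (γ c p).1, (γ c p).2)

/-- Translation of the vertices of a developed family of maps. -/
def translateVertex (t : A) : A × P ≃ A × P :=
  (Equiv.addLeft t).prodCongr (Equiv.refl P)

/-- The action of `translateVertex` on the indices of a developed family of maps. -/
def translateIndex (t : A) : (A × B) ⊕ C ≃ (A × B) ⊕ C :=
  (translateVertex t).sumCongr (Equiv.refl C)

theorem develop_translate (β : B → A × P → A × P) (γ : C → P → A × P) (t : A)
    (i : (A × B) ⊕ C) (x : A × P) :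
    develop β γ (translateIndex t i) (translateVertex t x) =
      translateVertex t (develop β γ i x) := by
  rcases i with ⟨a, b⟩ | c <;>
    simp [develop, translateVertex, translateIndex, add_assoc]

theorem isHoleyFactorization_develop [Fintype A] [Fintype B] [Fintype C] [Fintype P]
    {G : SimpleGraph (A × P)} [DecidableRel G.Adj] {hole : (A × B) ⊕ C → A × P → Prop}
    [∀ i x, Decidable (hole i x)] {k : (A × B) ⊕ C → ℕ} {β : B → A × P → A × P}
    {γ : C → P → A × P} (hk : ∀ i, k i ≠ 0)
    (hG : ∀ t x y, G.Adj (translateVertex t x) (translateVertex t y) ↔ G.Adj x y)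
    (hhole : ∀ t i x, hole (translateIndex t i) (translateVertex t x) ↔ hole i x)
    (hk' : ∀ t i, k (translateIndex t i) = k i)
    (h : ∀ p, IsHoleyFactorization.IsLocalAt G hole k (develop β γ) (0, p)) :
    IsHoleyFactorization G hole k (develop β γ) := by
  refine .of_isLocalAt hk fun ⟨x, p⟩ => ?_
  have translate_zero : translateVertex x ((0, p) : A × P) = (x, p) := by simp [translateVertex]
  rw [← translate_zero]
  exact (h p).apply_equiv _ _ (hG x) (hhole x) (hk' x) (develop_translate β γ x)

end Develop

/-! ### Small Kirkman triple systems -/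

/-- There is a Kirkman triple system of order `6 * n + 3`: a decomposition of the complete graph
into triangle factors. -/
def HasKirkmanSystem (n : ℕ) : Prop :=
  ∃ σ : Fin (3 * n + 1) → Fin (6 * n + 3) → Fin (6 * n + 3),
    IsFactorization (⊤ : SimpleGraph (Fin (6 * n + 3))) (fun _ => 3) σ

namespace HasKirkmanSystem

theorem of_card {X I : Type*} [Fintype X] [Fintype I] {σ : I → X → X}
    (h : IsFactorization (⊤ : SimpleGraph X) (fun _ => 3) σ) {n : ℕ}
    (hX : Fintype.card X = 6 * n + 3) (hI : Fintype.card I = 3 * n + 1) : HasKirkmanSystem n :=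
  ⟨_, h.transport (Fintype.equivFinOfCardEq hX) (Fintype.equivFinOfCardEq hI)
    (fun _ _ => by simp) (fun _ _ => Iff.rfl) fun _ => rfl⟩

theorem exists_of_card {n : ℕ} (h : HasKirkmanSystem n) {X I : Type*} [Fintype X] [Fintype I]
    (hX : Fintype.card X = 6 * n + 3) (hI : Fintype.card I = 3 * n + 1) :
    ∃ σ : I → X → X, IsFactorization (⊤ : SimpleGraph X) (fun _ => 3) σ :=
  have ⟨_, hσ⟩ := h
  ⟨_, hσ.transport (Fintype.equivFinOfCardEq hX).symm (Fintype.equivFinOfCardEq hI).symm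
    (fun _ _ => by simp) (fun _ _ => Iff.rfl) fun _ => rfl⟩

theorem of_develop {A B C P : Type*} [AddGroup A] [Fintype A] [Fintype B] [Fintype C] [Fintype P]
    [DecidableEq A] [DecidableEq P] (β : B → A × P → A × P) (γ : C → P → A × P)
    (h : ∀ p, IsHoleyFactorization.IsLocalAt (⊤ : SimpleGraph (A × P)) (fun _ _ => False)
      (fun _ => 3) (develop β γ) (0, p)) {n : ℕ}
    (hX : Fintype.card (A × P) = 6 * n + 3) (hI : Fintype.card ((A × B) ⊕ C) = 3 * n + 1) :
    HasKirkmanSystem n :=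
  of_card (isHoleyFactorization_develop (by simp) (by simp) (fun _ _ _ => Iff.rfl)
    (fun _ _ => rfl) h) hX hI

/-- Voltages over three copies of `Fin w`: the `j`-th map follows the triangles
`(x, 0), (x + a, 1), (x + b, 2)`, where `d j = (a, b)`. -/
def levelVoltages {n w : ℕ} [NeZero w] (d : Fin n → Fin w × Fin w) (j : Fin n) :
    Fin 3 → Fin w × Fin 3 :=
  ![((d j).1, 1), ((d j).2 - (d j).1, 2), (-(d j).2, 0)]

theorem of_levelVoltages {n w : ℕ} [NeZero w] (hw : w = 2 * n + 1)
    (base : List (List (Fin w × Fin 3))) (d : Fin n → Fin w × Fin w)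
    (h : ∀ p, IsHoleyFactorization.IsLocalAt (⊤ : SimpleGraph (Fin w × Fin 3)) (fun _ _ => False)
      (fun _ => 3) (develop (fun _ : Unit => cyclesMap base) (levelVoltages d)) (0, p)) :
    HasKirkmanSystem n :=
  of_develop _ _ h
    (by simp only [Fintype.card_prod, Fintype.card_fin, hw]; ring)
    (by simp only [Fintype.card_sum, Fintype.card_prod, Fintype.card_fin, Fintype.card_unit, hw]
        ring)

protected theorem zero : HasKirkmanSystem 0 :=
  ⟨fun _ => (· + 1), .of_isLocalAt (by simp) (by decide)⟩

set_option maxRecDepth 100000 in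
protected theorem two : HasKirkmanSystem 2 :=
  of_develop (A := Fin 3) (P := Fin 5)
    ![cyclesMap
        [[(0, 0), (1, 0), (2, 3)], [(0, 1), (0, 2), (0, 4)], [(0, 3), (1, 4), (2, 2)],
         [(1, 1), (2, 0), (2, 4)], [(1, 2), (1, 3), (2, 1)]],
      cyclesMap
        [[(0, 0), (0, 2), (1, 4)], [(0, 1), (1, 2), (2, 0)], [(0, 3), (0, 4), (2, 4)],
         [(1, 0), (1, 3), (2, 2)], [(1, 1), (2, 1), (2, 3)]]]
    (fun _ : Unit => ![(0, 1), (2, 4), (1, 2), (1, 3), (1, 0)])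
    (by decide +kernel) (by decide) (by decide)

set_option maxRecDepth 100000 in
protected theorem one : HasKirkmanSystem 1 :=
  of_levelVoltages (w := 3) rfl
    [[(0, 0), (2, 0), (2, 2)], [(1, 0), (1, 1), (2, 1)], [(0, 1), (0, 2), (1, 2)]]
    ![(2, 1)]
    (by decide +kernel)

set_option maxRecDepth 100000 in
protected theorem three : HasKirkmanSystem 3 :=
  of_levelVoltages (w := 7) rfl
    [[(0, 0), (0, 2), (6, 0)], [(1, 0), (3, 0), (5, 2)], [(2, 0), (5, 0), (0, 1)],
     [(4, 0), (4, 1), (5, 1)], [(1, 1), (3, 1), (6, 2)], [(2, 1), (3, 2), (6, 1)],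
     [(1, 2), (2, 2), (4, 2)]]
    ![(3, 3), (4, 6), (6, 5)]
    (by decide +kernel)

set_option maxRecDepth 100000 in
protected theorem four : HasKirkmanSystem 4 :=
  of_levelVoltages (w := 9) rfl
    [[(0, 0), (1, 0), (7, 0)], [(2, 0), (5, 1), (6, 2)], [(3, 0), (4, 2), (8, 2)],
     [(4, 0), (8, 0), (3, 1)], [(5, 0), (6, 1), (2, 2)], [(6, 0), (2, 1), (5, 2)],
     [(0, 1), (1, 1), (7, 1)], [(4, 1), (8, 1), (3, 2)], [(0, 2), (1, 2), (7, 2)]]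
    ![(0, 7), (2, 2), (7, 0), (6, 3)]
    (by decide +kernel)

set_option maxRecDepth 100000 in
protected theorem five : HasKirkmanSystem 5 :=
  of_levelVoltages (w := 11) rfl
    [[(0, 0), (0, 1), (0, 2)], [(1, 0), (2, 0), (3, 1)], [(3, 0), (1, 1), (2, 1)],
     [(4, 0), (7, 0), (9, 0)], [(5, 0), (7, 2), (9, 1)], [(6, 0), (9, 2), (10, 0)],
     [(8, 0), (2, 2), (3, 2)], [(4, 1), (8, 1), (1, 2)], [(5, 1), (7, 1), (10, 1)],
     [(6, 1), (8, 2), (5, 2)], [(4, 2), (6, 2), (10, 2)]]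
    ![(3, 9), (5, 8), (6, 7), (7, 1), (8, 4)]
    (by decide +kernel)

set_option maxRecDepth 100000 in
protected theorem six : HasKirkmanSystem 6 :=
  of_levelVoltages (w := 13) rfl
    [[(0, 0), (0, 1), (0, 2)], [(1, 0), (2, 1), (10, 1)], [(2, 0), (10, 0), (1, 2)],
     [(3, 0), (5, 2), (6, 2)], [(4, 0), (8, 0), (11, 0)], [(5, 0), (6, 0), (3, 1)],
     [(7, 0), (9, 0), (12, 1)], [(12, 0), (7, 2), (9, 2)], [(1, 1), (2, 2), (10, 2)],
     [(4, 1), (8, 1), (11, 1)], [(5, 1), (6, 1), (3, 2)], [(7, 1), (9, 1), (12, 2)],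
     [(4, 2), (8, 2), (11, 2)]]
    ![(2, 9), (4, 6), (7, 11), (6, 5), (8, 1), (12, 7)]
    (by decide +kernel)

set_option maxRecDepth 100000 in
protected theorem seven : HasKirkmanSystem 7 :=
  of_levelVoltages (w := 15) rfl
    [[(0, 0), (4, 2), (10, 0)], [(1, 0), (2, 2), (3, 0)], [(2, 0), (3, 1), (1, 1)],
     [(4, 0), (10, 1), (0, 1)], [(5, 0), (8, 0), (9, 0)], [(6, 0), (12, 2), (14, 0)],
     [(7, 0), (11, 1), (13, 0)], [(11, 0), (13, 2), (7, 2)], [(12, 0), (14, 1), (6, 1)],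
     [(2, 1), (3, 2), (1, 2)], [(4, 1), (10, 2), (0, 2)], [(5, 1), (8, 1), (9, 1)],
     [(7, 1), (11, 2), (13, 1)], [(12, 1), (14, 2), (6, 2)], [(5, 2), (8, 2), (9, 2)]]
    ![(0, 0), (3, 10), (5, 8), (7, 12), (8, 5), (10, 3), (12, 7)]
    (by decide +kernel)

set_option maxRecDepth 100000 in
protected theorem eight : HasKirkmanSystem 8 :=
  of_levelVoltages (w := 17) rfl
    [[(0, 0), (5, 1), (9, 1)], [(1, 0), (5, 0), (16, 0)], [(2, 0), (7, 0), (1, 1)],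
     [(3, 0), (4, 1), (14, 2)], [(4, 0), (5, 2), (3, 2)], [(6, 0), (13, 0), (14, 0)],
     [(8, 0), (8, 1), (11, 0)], [(9, 0), (11, 2), (6, 2)], [(10, 0), (13, 1), (8, 2)],
     [(12, 0), (15, 2), (2, 1)], [(15, 0), (2, 2), (10, 2)], [(0, 1), (10, 1), (12, 1)],
     [(3, 1), (11, 1), (14, 1)], [(6, 1), (7, 1), (12, 2)], [(15, 1), (16, 2), (9, 2)],
     [(16, 1), (7, 2), (13, 2)], [(0, 2), (1, 2), (4, 2)]]
    ![(2, 6), (4, 7), (6, 8), (8, 0), (10, 9), (12, 10), (13, 13), (15, 5)]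
    (by decide +kernel)

set_option maxRecDepth 100000 in
protected theorem nine : HasKirkmanSystem 9 :=
  of_levelVoltages (w := 19) rfl
    [[(0, 0), (5, 2), (17, 2)], [(1, 0), (7, 1), (12, 1)], [(2, 0), (4, 0), (10, 0)],
     [(3, 0), (13, 2), (16, 1)], [(5, 0), (17, 0), (0, 1)], [(6, 0), (8, 2), (18, 2)],
     [(7, 0), (12, 0), (1, 2)], [(8, 0), (18, 0), (6, 1)], [(9, 0), (9, 1), (9, 2)],
     [(11, 0), (14, 0), (15, 0)], [(13, 0), (16, 2), (3, 1)], [(16, 0), (3, 2), (13, 1)],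
     [(1, 1), (7, 2), (12, 2)], [(2, 1), (4, 1), (10, 1)], [(5, 1), (17, 1), (0, 2)],
     [(8, 1), (18, 1), (6, 2)], [(11, 1), (14, 1), (15, 1)], [(2, 2), (4, 2), (10, 2)],
     [(11, 2), (14, 2), (15, 2)]]
    ![(1, 11), (8, 9), (10, 18), (3, 15), (4, 7), (12, 16), (5, 4), (15, 1), (18, 14)]
    (by decide +kernel)

set_option maxRecDepth 100000 in
protected theorem ten : HasKirkmanSystem 10 :=
  of_levelVoltages (w := 21) rfl
    [[(0, 0), (1, 2), (12, 2)], [(1, 0), (12, 0), (0, 1)], [(2, 0), (6, 0), (18, 0)],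
     [(3, 0), (5, 2), (19, 2)], [(4, 0), (8, 2), (16, 1)], [(5, 0), (19, 0), (3, 1)],
     [(7, 0), (17, 2), (20, 0)], [(8, 0), (16, 2), (4, 1)], [(9, 0), (10, 1), (15, 0)],
     [(10, 0), (15, 2), (9, 2)], [(11, 0), (13, 0), (14, 0)], [(16, 0), (4, 2), (8, 1)],
     [(17, 0), (20, 1), (7, 1)], [(1, 1), (12, 1), (0, 2)], [(2, 1), (6, 1), (18, 1)],
     [(5, 1), (19, 1), (3, 2)], [(9, 1), (10, 2), (15, 1)], [(11, 1), (13, 1), (14, 1)],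
     [(17, 1), (20, 2), (7, 2)], [(2, 2), (6, 2), (18, 2)], [(11, 2), (13, 2), (14, 2)]]
    ![(0, 0), (2, 6), (4, 19), (15, 17), (6, 14), (7, 13), (8, 15), (10, 7), (14, 3), (18, 11)]
    (by decide +kernel)

set_option maxRecDepth 100000 in
protected theorem eleven : HasKirkmanSystem 11 :=
  of_levelVoltages (w := 23) rfl
    [[(0, 0), (5, 0), (14, 1)], [(1, 0), (8, 2), (14, 2)], [(2, 0), (6, 1), (14, 0)],
     [(3, 0), (7, 0), (13, 2)], [(4, 0), (21, 0), (2, 2)], [(6, 0), (16, 0), (18, 1)],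
     [(8, 0), (17, 2), (5, 1)], [(9, 0), (17, 0), (22, 1)], [(10, 0), (19, 0), (22, 2)],
     [(11, 0), (18, 0), (21, 1)], [(12, 0), (13, 0), (15, 0)], [(20, 0), (20, 2), (21, 2)],
     [(22, 0), (19, 2), (20, 1)], [(0, 1), (11, 1), (13, 1)], [(1, 1), (16, 1), (17, 1)],
     [(2, 1), (7, 1), (9, 2)], [(3, 1), (9, 1), (12, 1)], [(4, 1), (4, 2), (12, 2)],
     [(8, 1), (1, 2), (6, 2)], [(10, 1), (11, 2), (15, 2)], [(15, 1), (19, 1), (5, 2)],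
     [(0, 2), (3, 2), (10, 2)], [(7, 2), (16, 2), (18, 2)]]
    ![(0, 15), (1, 11), (6, 2), (7, 18), (8, 14), (11, 5), (16, 19), (17, 8), (18, 22), (19, 16),
      (22, 17)]
    (by decide +kernel)

set_option maxRecDepth 100000 in
protected theorem twelve : HasKirkmanSystem 12 :=
  of_levelVoltages (w := 25) rfl
    [[(0, 0), (9, 0), (23, 2)], [(1, 0), (15, 0), (16, 1)], [(2, 0), (14, 0), (20, 0)],
     [(3, 0), (8, 2), (13, 0)], [(4, 0), (6, 0), (21, 2)], [(5, 0), (12, 1), (17, 1)],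
     [(7, 0), (11, 2), (24, 0)], [(8, 0), (13, 1), (3, 1)], [(10, 0), (10, 1), (10, 2)],
     [(11, 0), (24, 1), (7, 1)], [(12, 0), (17, 0), (5, 2)], [(16, 0), (1, 2), (15, 2)],
     [(18, 0), (19, 0), (22, 0)], [(21, 0), (4, 1), (6, 1)], [(23, 0), (0, 1), (9, 1)],
     [(1, 1), (15, 1), (16, 2)], [(2, 1), (14, 1), (20, 1)], [(5, 1), (12, 2), (17, 2)],
     [(8, 1), (13, 2), (3, 2)], [(11, 1), (24, 2), (7, 2)], [(18, 1), (19, 1), (22, 1)],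
     [(21, 1), (4, 2), (6, 2)], [(23, 1), (0, 2), (9, 2)], [(2, 2), (14, 2), (20, 2)],
     [(18, 2), (19, 2), (22, 2)]]
    ![(3, 19), (6, 9), (16, 22), (4, 3), (22, 1), (24, 21), (9, 7), (18, 2), (23, 16), (14, 8),
      (17, 6), (19, 11)]
    (by decide +kernel)

set_option maxRecDepth 100000 in
protected theorem thirteen : HasKirkmanSystem 13 :=
  of_levelVoltages (w := 27) rfl
    [[(0, 0), (5, 0), (20, 0)], [(1, 0), (9, 1), (25, 0)], [(2, 0), (7, 2), (12, 0)],
     [(3, 0), (14, 0), (26, 2)], [(4, 0), (10, 1), (13, 0)], [(6, 0), (18, 1), (19, 1)],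
     [(7, 0), (12, 1), (2, 1)], [(8, 0), (15, 1), (16, 0)], [(9, 0), (25, 2), (1, 2)],
     [(10, 0), (13, 2), (4, 2)], [(11, 0), (22, 2), (24, 0)], [(15, 0), (16, 2), (8, 2)],
     [(17, 0), (21, 0), (23, 0)], [(18, 0), (19, 0), (6, 2)], [(22, 0), (24, 1), (11, 1)],
     [(26, 0), (3, 1), (14, 1)], [(0, 1), (5, 1), (20, 1)], [(1, 1), (9, 2), (25, 1)],
     [(4, 1), (10, 2), (13, 1)], [(6, 1), (18, 2), (19, 2)], [(7, 1), (12, 2), (2, 2)],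
     [(8, 1), (15, 2), (16, 1)], [(17, 1), (21, 1), (23, 1)], [(22, 1), (24, 2), (11, 2)],
     [(26, 1), (3, 2), (14, 2)], [(0, 2), (5, 2), (20, 2)], [(17, 2), (21, 2), (23, 2)]]
    ![(0, 17), (10, 10), (17, 0), (1, 24), (3, 4), (23, 26), (9, 7), (20, 2), (25, 18), (14, 8),
      (19, 6), (21, 13), (18, 9)]
    (by decide +kernel)

set_option maxRecDepth 100000 in
protected theorem fourteen : HasKirkmanSystem 14 :=
  of_levelVoltages (w := 29) rfl
    [[(0, 0), (1, 0), (22, 0)], [(2, 0), (4, 0), (7, 0)], [(3, 0), (4, 1), (6, 2)],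
     [(5, 0), (5, 2), (28, 0)], [(6, 0), (17, 1), (18, 1)], [(8, 0), (16, 2), (17, 0)],
     [(9, 0), (11, 2), (19, 0)], [(10, 0), (17, 2), (21, 0)], [(11, 0), (25, 0), (28, 1)],
     [(12, 0), (27, 1), (27, 2)], [(13, 0), (21, 1), (26, 0)], [(14, 0), (18, 0), (3, 1)],
     [(15, 0), (27, 0), (28, 2)], [(16, 0), (20, 1), (0, 1)], [(20, 0), (0, 2), (14, 1)],
     [(23, 0), (13, 2), (18, 2)], [(24, 0), (11, 1), (23, 1)], [(1, 1), (8, 2), (19, 2)],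
     [(2, 1), (8, 1), (15, 1)], [(5, 1), (7, 1), (10, 1)], [(6, 1), (16, 1), (24, 1)],
     [(9, 1), (13, 1), (3, 2)], [(12, 1), (25, 2), (26, 1)], [(19, 1), (23, 2), (2, 2)],
     [(22, 1), (4, 2), (20, 2)], [(25, 1), (26, 2), (22, 2)], [(1, 2), (15, 2), (21, 2)],
     [(7, 2), (14, 2), (24, 2)], [(9, 2), (10, 2), (12, 2)]]
    ![(0, 10), (2, 22), (5, 26), (6, 11), (7, 16), (9, 17), (10, 5), (19, 4), (20, 23), (21, 27),
      (22, 18), (25, 12), (26, 14), (27, 20)]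
    (by decide +kernel)

set_option maxRecDepth 100000 in
protected theorem fifteen : HasKirkmanSystem 15 :=
  of_levelVoltages (w := 31) rfl
    [[(0, 0), (0, 1), (0, 2)], [(1, 0), (3, 2), (10, 1)], [(2, 0), (6, 2), (20, 1)],
     [(3, 0), (10, 2), (1, 1)], [(4, 0), (9, 1), (12, 2)], [(5, 0), (16, 2), (17, 1)],
     [(6, 0), (20, 2), (2, 1)], [(7, 0), (26, 0), (27, 0)], [(8, 0), (18, 1), (24, 2)],
     [(9, 0), (12, 1), (4, 2)], [(10, 0), (1, 2), (3, 1)], [(11, 0), (15, 0), (28, 0)],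
     [(12, 0), (4, 1), (9, 2)], [(13, 0), (19, 0), (29, 0)], [(14, 0), (21, 0), (23, 0)],
     [(16, 0), (17, 2), (5, 1)], [(17, 0), (5, 2), (16, 1)], [(18, 0), (24, 1), (8, 2)],
     [(20, 0), (2, 2), (6, 1)], [(22, 0), (25, 0), (30, 0)], [(24, 0), (8, 1), (18, 2)],
     [(7, 1), (26, 1), (27, 1)], [(11, 1), (15, 1), (28, 1)], [(13, 1), (19, 1), (29, 1)],
     [(14, 1), (21, 1), (23, 1)], [(22, 1), (25, 1), (30, 1)], [(7, 2), (26, 2), (27, 2)],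
     [(11, 2), (15, 2), (28, 2)], [(13, 2), (19, 2), (29, 2)], [(14, 2), (21, 2), (23, 2)],
     [(22, 2), (25, 2), (30, 2)]]
    ![(1, 20), (2, 9), (4, 18), (7, 29), (8, 5), (11, 12), (13, 17), (14, 27), (16, 10), (19, 30),
      (21, 6), (22, 24), (25, 15), (26, 3), (28, 23)]
    (by decide +kernel)

theorem of_le_fifteen {n : ℕ} (hn : n ≤ 15) : HasKirkmanSystem n := by
  interval_cases n
  exacts [.zero, .one, .two, .three, .four, .five, .six, .seven, .eight, .nine, .ten, .eleven,
    .twelve, .thirteen, .fourteen, .fifteen]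

end HasKirkmanSystem

/-! ### Small Kirkman frames -/

/-- There is a Kirkman frame whose parts are six times the fibres of `g`: the complete multipartite
graph on `T × Fin 6` decomposes into triangle factors of the complements of its parts, the factor
`(t, j)` missing the part over `g t`. A frame of type `6 ^ |Γ|` is the case `g = id`. -/
def HasKirkmanFrame {T Γ : Type*} (g : T → Γ) : Prop :=
  ∃ σ : T × Fin 3 → T × Fin 6 → T × Fin 6,
    IsHoleyFactorization ((⊤ : SimpleGraph Γ).comap fun x => g x.1) (fun i x => g x.1 = g i.1)
      (fun _ => 3) σ

theorem exists_equiv_prod_fin {X Γ : Type*} [Fintype X] [DecidableEq Γ] (g : X → Γ) {m : ℕ}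
    (hg : ∀ c, Fintype.card {x // g x = c} = m) : ∃ e : X ≃ Γ × Fin m, ∀ x, (e x).1 = g x :=
  ⟨(Equiv.sigmaFiberEquiv g).symm.trans
    ((Equiv.sigmaCongrRight fun c => Fintype.equivFinOfCardEq (hg c)).trans
      (Equiv.sigmaEquivProd Γ (Fin m))), fun _ => rfl⟩

namespace HasKirkmanFrame

theorem id_congr {Γ Γ' : Type*} (h : HasKirkmanFrame (@id Γ)) (e : Γ ≃ Γ') :
    HasKirkmanFrame (@id Γ') :=
  have ⟨_, hσ⟩ := h
  ⟨_, hσ.transport (e.prodCongr (Equiv.refl _)) (e.prodCongr (Equiv.refl _)) (by simp)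
    (by simp) fun _ => rfl⟩

theorem id_of_groups {X I Γ : Type*} [Fintype X] [Fintype I] [DecidableEq Γ] {g : X → Γ}
    {g' : I → Γ} {σ : I → X → X} (h : IsHoleyFactorization ((⊤ : SimpleGraph Γ).comap g)
      (fun i x => g x = g' i) (fun _ => 3) σ)
    (hg : ∀ c, Fintype.card {x // g x = c} = 6) (hg' : ∀ c, Fintype.card {i // g' i = c} = 3) :
    HasKirkmanFrame (@id Γ) := by
  obtain ⟨e, he⟩ := exists_equiv_prod_fin g hg
  obtain ⟨f, hf⟩ := exists_equiv_prod_fin g' hg'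
  exact ⟨_, h.transport e f (by simp [he]) (by simp [he, hf]) fun _ => rfl⟩

theorem id_of_develop {A B C P Γ : Type*} [AddGroup A] [Fintype A] [Fintype B] [Fintype C]
    [Fintype P] [DecidableEq Γ] (g : A × P → Γ) (g' : (A × B) ⊕ C → Γ) (β : B → A × P → A × P)
    (γ : C → P → A × P)
    (h : ∀ p, IsHoleyFactorization.IsLocalAt ((⊤ : SimpleGraph Γ).comap g) (fun i x => g x = g' i)
      (fun _ => 3) (develop β γ) (0, p))
    (group_translate : ∀ t x y, g (translateVertex t x) = g (translateVertex t y) ↔ g x = g y)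
    (hole_translate : ∀ t i x, g (translateVertex t x) = g' (translateIndex t i) ↔ g x = g' i)
    (hg : ∀ c, Fintype.card {x // g x = c} = 6) (hg' : ∀ c, Fintype.card {i // g' i = c} = 3) :
    HasKirkmanFrame (@id Γ) :=
  id_of_groups (isHoleyFactorization_develop (by simp)
    (fun t x y => not_congr (group_translate t x y)) hole_translate (fun _ _ => rfl) h) hg hg'

set_option maxRecDepth 100000 in
/-- A frame of type `2 ^ 4`, blown up by a factor `3` with one copy for each voltage `j`. -/
theorem id_four : HasKirkmanFrame (@id (Fin 4)) :=
  id_of_develop (A := Fin 3) (B := Empty) (P := Fin 4 × Fin 2) (fun x => x.2.1)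
    (Sum.elim (fun i => i.2.elim) Prod.fst)
    (fun b => b.elim)
    (fun ((h, j) : Fin 4 × Fin 3) p => (if p.1 = h then 0 else j,
      ![cyclesMap [[(1, 0), (2, 0), (3, 0)], [(1, 1), (2, 1), (3, 1)]],
        cyclesMap [[(0, 0), (2, 0), (3, 1)], [(0, 1), (2, 1), (3, 0)]],
        cyclesMap [[(0, 0), (1, 1), (3, 0)], [(0, 1), (1, 0), (3, 1)]],
        cyclesMap [[(0, 0), (1, 0), (2, 1)], [(0, 1), (1, 1), (2, 0)]]] h p))
    (by decide +kernel) (by decide) (by decide) (by decide) (by decide)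

set_option maxRecDepth 100000 in
theorem id_five : HasKirkmanFrame (@id (Fin 5)) :=
  id_of_develop (A := Fin 5 × Fin 3) (B := Unit) (C := Empty) (P := Fin 2) (fun x => x.1.1)
    (Sum.elim (fun i => i.1.1) Empty.elim)
    (fun _ => cyclesMap
      [[((1, 0), 0), ((2, 0), 1), ((3, 1), 1)], [((1, 1), 1), ((2, 1), 0), ((3, 0), 0)],
       [((1, 0), 1), ((2, 2), 0), ((4, 2), 1)], [((1, 1), 0), ((2, 2), 1), ((4, 2), 0)],
       [((1, 2), 0), ((3, 2), 0), ((4, 1), 1)], [((1, 2), 1), ((3, 2), 1), ((4, 0), 0)],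
       [((2, 0), 0), ((3, 1), 0), ((4, 1), 0)], [((2, 1), 1), ((3, 0), 1), ((4, 0), 1)]])
    (fun c => c.elim)
    (by decide +kernel) (by decide +kernel) (by decide +kernel) (by decide) (by decide)

set_option maxRecDepth 100000 in
theorem id_six : HasKirkmanFrame (@id (Fin 6)) :=
  id_congr (e := finProdFinEquiv (m := 3) (n := 2)) <|
  id_of_develop (A := Fin 3 × Fin 3) (C := Empty) (P := Fin 2 × Fin 2) (fun x => (x.1.1, x.2.1))
    (Sum.elim (fun i => (i.1.1, i.2)) Empty.elim)
    ![cyclesMap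
        [[((0, 0), (1, 0)), ((1, 2), (0, 0)), ((1, 1), (1, 1))],
         [((0, 1), (1, 0)), ((1, 1), (0, 0)), ((2, 2), (0, 1))],
         [((0, 1), (1, 1)), ((1, 0), (0, 0)), ((2, 1), (0, 0))],
         [((0, 2), (1, 1)), ((1, 0), (0, 1)), ((2, 1), (1, 1))],
         [((0, 0), (1, 1)), ((1, 0), (1, 0)), ((2, 1), (1, 0))],
         [((0, 2), (1, 0)), ((2, 0), (0, 0)), ((2, 0), (1, 1))],
         [((1, 1), (0, 1)), ((1, 2), (1, 1)), ((2, 2), (0, 0))],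
         [((1, 2), (0, 1)), ((1, 2), (1, 0)), ((2, 2), (1, 0))],
         [((1, 0), (1, 1)), ((2, 0), (0, 1)), ((2, 2), (1, 1))],
         [((1, 1), (1, 0)), ((2, 1), (0, 1)), ((2, 0), (1, 0))]],
      cyclesMap
        [[((0, 0), (0, 0)), ((1, 0), (0, 1)), ((1, 1), (1, 0))],
         [((0, 2), (0, 0)), ((1, 1), (0, 1)), ((2, 2), (0, 1))],
         [((0, 0), (0, 1)), ((1, 2), (0, 0)), ((2, 2), (1, 0))],
         [((0, 1), (0, 1)), ((1, 2), (1, 0)), ((2, 1), (0, 1))],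
         [((0, 2), (0, 1)), ((1, 1), (1, 1)), ((2, 0), (0, 1))],
         [((0, 1), (0, 0)), ((2, 2), (0, 0)), ((2, 0), (1, 0))],
         [((1, 1), (0, 0)), ((1, 0), (1, 0)), ((2, 0), (1, 1))],
         [((1, 2), (0, 1)), ((1, 2), (1, 1)), ((2, 2), (1, 1))],
         [((1, 0), (0, 0)), ((2, 0), (0, 0)), ((2, 1), (1, 1))],
         [((1, 0), (1, 1)), ((2, 1), (0, 0)), ((2, 1), (1, 0))]]]
    (fun c => c.elim)
    (by decide +kernel) (by decide +kernel) (by decide +kernel) (by decide) (by decide)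

theorem id_of_card_mem_Icc {Γ : Type*} [Fintype Γ] (h : Fintype.card Γ ∈ Finset.Icc 4 6) :
    HasKirkmanFrame (@id Γ) := by
  have frame_fin (m : ℕ) (hm : m ∈ Finset.Icc 4 6) : HasKirkmanFrame (@id (Fin m)) := by
    fin_cases hm
    exacts [id_four, id_five, id_six]
  exact (frame_fin _ h).id_congr (Fintype.equivFin Γ).symm

end HasKirkmanFrame

/-! ### Kirkman triple systems with a hole of size three -/

section Orbit

universe u

variable {X : Type u} {p : ℕ} {f : X → X} {x : X}

theorem injective_iterate_of_prime (hp : p.Prime) (hx : f^[p] x = x) (hne : f x ≠ x) :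
    Function.Injective fun j : Fin p => f^[j] x := by
  have := Fact.mk hp
  have period : Function.minimalPeriod f x = p := Function.minimalPeriod_eq_prime hx hne
  intro i j hij
  exact Fin.ext ((Function.iterate_eq_iterate_iff_of_lt_minimalPeriod (period ▸ i.2)
    (period ▸ j.2)).1 hij)

theorem iterate_fin_add_one [NeZero p] (hx : f^[p] x = x) (j : Fin p) :
    f^[(j + 1 : Fin p)] x = f (f^[j] x) := by
  have hperiod : Function.IsPeriodicPt f p x := hx
  rw [← Function.iterate_succ_apply' f, Fin.val_add, Fin.val_one', Nat.add_mod_mod,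
    hperiod.iterate_mod_apply]

/-- The points of `X` up to the action of `f`, when `f^[p] = id` for some `0 < p`. -/
def orbitSetoid (hp : 0 < p) (hf : ∀ x, f^[p] x = x) : Setoid X where
  r x y := ∃ m, f^[m] x = y
  iseqv :=
    { refl := fun _ => ⟨0, rfl⟩
      symm := by
        rintro x _ ⟨m, rfl⟩
        refine ⟨(p - 1) * m, ?_⟩
        rw [← Function.iterate_add_apply, ← Nat.succ_mul, Nat.succ_eq_add_one,
          Nat.sub_add_cancel hp, Function.iterate_mul, Function.iterate_fixed (hf x)]
      trans := by
        rintro x _ _ ⟨m, rfl⟩ ⟨m', rfl⟩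
        exact ⟨m' + m, Function.iterate_add_apply ..⟩ }

theorem exists_orbit_equiv [NeZero p] (hp : p.Prime) (hf : ∀ x, f^[p] x = x)
    (hne : ∀ x, f x ≠ x) :
    ∃ (S : Type u) (e : S × Fin p ≃ X), ∀ s j, f (e (s, j)) = e (s, j + 1) := by
  let S := Quotient (orbitSetoid hp.pos hf)
  let e (a : S × Fin p) : X := f^[a.2] a.1.out
  have mk_apply (a : S × Fin p) : (⟦e a⟧ : S) = a.1 :=
    (Quotient.sound (s := orbitSetoid hp.pos hf) ⟨(a.2 : ℕ), rfl⟩).symm.trans a.1.out_eq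
  have injective : Function.Injective e := by
    rintro ⟨s, j⟩ ⟨s', j'⟩ h
    obtain rfl : s = s' := (mk_apply (s, j)).symm.trans (h ▸ mk_apply (s', j'))
    exact congrArg _ (injective_iterate_of_prime hp (hf s.out) (hne s.out) h)
  have surjective : Function.Surjective e := by
    intro x
    obtain ⟨m, hm⟩ : ∃ m, f^[m] (⟦x⟧ : S).out = x :=
      Quotient.mk_out (s := orbitSetoid hp.pos hf) x
    have hperiod : Function.IsPeriodicPt f p (⟦x⟧ : S).out := hf _
    exact ⟨(⟦x⟧, ⟨m % p, Nat.mod_lt m hp.pos⟩), (hperiod.iterate_mod_apply m).trans hm⟩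
  exact ⟨S, .ofBijective e ⟨injective, surjective⟩,
    fun s j => (iterate_fin_add_one (hf s.out) j).symm⟩

end Orbit

section Delete

variable {X I : Type*} {G : SimpleGraph X} {hole : I → X → Prop} {k : I → ℕ} {σ : I → X → X}
  {S : Set X} {i₀ : I}

open Classical in
/-- The maps `σ` with the part of `σ i₀` that acts on `S` removed. -/
noncomputable def deleteMap (σ : I → X → X) (i₀ : I) (S : Set X) (i : I) (x : X) : X :=
  if i = i₀ ∧ x ∈ S then x else σ i x

theorem deleteMap_apply_eq_iff (hS : S.MapsTo (σ i₀) S) {x y : X} (hne : x ≠ y)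
    (not_both : ¬(x ∈ S ∧ y ∈ S)) (i : I) : deleteMap σ i₀ S i x = y ↔ σ i x = y := by
  rw [deleteMap]
  split_ifs with hx
  · refine iff_of_false hne fun hy => not_both ⟨hx.2, ?_⟩
    rw [← hy, hx.1]
    exact hS hx.2
  · rfl

namespace IsHoleyFactorization

theorem mapsTo_compl (h : IsHoleyFactorization G hole k σ) (hk : k i₀ ≠ 0)
    (hS : S.MapsTo (σ i₀) S) : Sᶜ.MapsTo (σ i₀) Sᶜ := by
  intro x hx hσx
  have hmem := hS.iterate (k i₀ - 1) hσx
  rw [← Function.iterate_succ_apply, Nat.succ_eq_add_one,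
    Nat.sub_add_cancel (Nat.one_le_iff_ne_zero.2 hk), h.iterate_eq] at hmem
  exact hx hmem

theorem iterate_deleteMap (h : IsHoleyFactorization G hole k σ) (hk : k i₀ ≠ 0)
    (hS : S.MapsTo (σ i₀) S) (i : I) (x : X) : (deleteMap σ i₀ S i)^[k i] x = x := by
  by_cases hx : i = i₀ ∧ x ∈ S
  · have fixed : deleteMap σ i₀ S i x = x := if_pos hx
    exact Function.iterate_fixed fixed _
  · have eqOn : {x | ¬(i = i₀ ∧ x ∈ S)}.EqOn (deleteMap σ i₀ S i) (σ i) :=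
      fun _ hz => if_neg hz
    have mapsTo : {x | ¬(i = i₀ ∧ x ∈ S)}.MapsTo (σ i) {x | ¬(i = i₀ ∧ x ∈ S)} := by
      rintro z hz ⟨rfl, hσz⟩
      exact h.mapsTo_compl hk hS (fun hzS => hz ⟨rfl, hzS⟩) hσz
    rw [eqOn_iterate eqOn mapsTo _ hx, h.iterate_eq]

theorem delete (h : IsHoleyFactorization G hole k σ) (hk : k i₀ ≠ 0) (hS : S.MapsTo (σ i₀) S)
    (joined : ∀ x ∈ S, ∀ y ∈ S, x ≠ y → σ i₀ x = y ∨ σ i₀ y = x) {G' : SimpleGraph X}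
    (hG' : ∀ x y, G'.Adj x y ↔ G.Adj x y ∧ ¬(x ∈ S ∧ y ∈ S)) :
    IsHoleyFactorization G' (fun i x => hole i x ∨ i = i₀ ∧ x ∈ S) k (deleteMap σ i₀ S) where
  iterate_eq := h.iterate_deleteMap hk hS
  apply_eq_self_iff i x := by
    by_cases hx : i = i₀ ∧ x ∈ S <;> simp [deleteMap, hx, h.apply_eq_self_iff]
  adj_apply i x hx := by
    obtain ⟨hole_x, not_deleted⟩ := not_or.1 hx
    have adj := h.adj_apply i x hole_x
    rw [deleteMap, if_neg not_deleted, hG']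
    refine ⟨adj, fun hmem => not_deleted ⟨?_, hmem.1⟩⟩
    exact (h.existsUnique _ _ adj).unique (.inl rfl) (joined _ hmem.1 _ hmem.2 adj.ne)
  existsUnique x y hxy := by
    obtain ⟨adj, not_both⟩ := (hG' x y).1 hxy
    simpa only [deleteMap_apply_eq_iff hS adj.ne not_both,
      deleteMap_apply_eq_iff hS adj.ne' fun hyx => not_both hyx.symm] using h.existsUnique x y adj

end IsHoleyFactorization

end Delete

/-- There is a Kirkman triple system on `6 * |T| + 3` points with one triangle deleted: the
points are `(T × Fin 6) ⊕ Fin 3`, the deleted triangle is `Fin 3`, and it comes from the factor with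
index `none`. -/
def HasIncompleteKirkmanSystem (T : Type*) : Prop :=
  ∃ σ : Option (T × Fin 3) → (T × Fin 6) ⊕ Fin 3 → (T × Fin 6) ⊕ Fin 3,
    IsHoleyFactorization ((⊤ : SimpleGraph (Option (T × Fin 6))).comap Sum.getLeft?)
      (fun i x => i = none ∧ x.getLeft? = none) (fun _ => 3) σ

theorem exists_perm_apply_eq {X ι : Type*} [Finite X] {u v : ι → X} (hu : u.Injective)
    (hv : v.Injective) : ∃ e : Equiv.Perm X, ∀ i, e (u i) = v i := by
  classical
  let e := (Equiv.ofInjective u hu).symm.trans (Equiv.ofInjective v hv)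
  refine ⟨e.extendSubtype, fun i => ?_⟩
  rw [e.extendSubtype_apply_of_mem _ (Set.mem_range_self i)]
  simp [e]

theorem HasIncompleteKirkmanSystem.congr {T T' : Type*} (h : HasIncompleteKirkmanSystem T)
    (e : T ≃ T') : HasIncompleteKirkmanSystem T' := by
  obtain ⟨σ, hσ⟩ := h
  refine ⟨_, hσ.transport ((e.prodCongr (.refl _)).sumCongr (.refl _))
    (e.prodCongr (.refl _)).optionCongr ?_ ?_ fun _ => rfl⟩
  · rintro (⟨t, i⟩ | x) (⟨t', j⟩ | y) <;> simp
  · rintro (_ | i) (x | x) <;> simp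

theorem HasKirkmanSystem.hasIncompleteKirkmanSystem {T : Type*} [Fintype T]
    (h : HasKirkmanSystem (Fintype.card T)) : HasIncompleteKirkmanSystem T := by
  obtain ⟨σ, hσ⟩ := h.exists_of_card (X := (T × Fin 6) ⊕ Fin 3) (I := Option (T × Fin 3))
    (by simp [mul_comm]) (by simp [mul_comm])
  obtain ⟨e, he⟩ := exists_perm_apply_eq
    (injective_iterate_of_prime Nat.prime_three (hσ.iterate_eq none (.inr 0))
      (hσ.ne_of_not_hole not_false)) (Sum.inr_injective (α := T × Fin 6))
  have hτ := hσ.transport e (.refl _) (G' := ⊤) (hole' := fun _ _ => False) (k' := fun _ => 3)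
    (by simp) (by simp) (by simp)
  set τ := IsHoleyFactorization.extendMap e.toEmbedding (Equiv.refl _).toEmbedding σ
  have apply_inr (j : Fin 3) : τ none (.inr j) = .inr (j + 1) := by
    rw [← he j, ← he (j + 1), iterate_fin_add_one (hσ.iterate_eq none _)]
    exact IsHoleyFactorization.extendMap_apply ..
  have hδ := hτ.delete (i₀ := none) (S := Set.range .inr) (by simp)
    (G' := (⊤ : SimpleGraph (Option (T × Fin 6))).comap Sum.getLeft?) ?_ ?_ ?_
  · exact ⟨_, hδ.transport (.refl _) (.refl _) (by simp) (by simp [eq_comm]) (by simp)⟩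
  · rintro _ ⟨j, rfl⟩
    exact ⟨j + 1, (apply_inr j).symm⟩
  · rintro _ ⟨i, rfl⟩ _ ⟨j, rfl⟩ hij
    simp only [apply_inr, Sum.inr.injEq, ne_eq] at hij ⊢
    revert i j
    decide
  · rintro (x | x) (y | y) <;> simp

/-! ### Kirkman triple systems from frames -/

/-- Wilson's construction: a Kirkman frame on each block of a group divisible design. -/
theorem HasKirkmanFrame.of_blocks {T Γ B : Type*} {Δ : B → Type*} {g : T → Γ} {φ : ∀ b, Δ b → T}
    (hφ : ∀ b, Function.Injective (g ∘ φ b))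
    (hcover : ∀ t t', g t ≠ g t' → ∃! b, t ∈ Set.range (φ b) ∧ t' ∈ Set.range (φ b))
    (h : ∀ b, HasKirkmanFrame (@id (Δ b))) : HasKirkmanFrame g := by
  choose σ hσ using h
  let ψ (b : B) : Δ b ↪ T := ⟨φ b, (hφ b).of_comp⟩
  have group_ne {b : B} {d d' : Δ b} (hd : d ≠ d') : g (φ b d) ≠ g (φ b d') := (hφ b).ne hd
  have block_unique {b b' : B} {d₁ d₂ : Δ b} {d₁' d₂' : Δ b'} (hd : d₁ ≠ d₂)
      (h₁ : φ b d₁ = φ b' d₁') (h₂ : φ b d₂ = φ b' d₂') : b = b' :=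
    (hcover _ _ (group_ne hd)).unique ⟨⟨d₁, rfl⟩, ⟨d₂, rfl⟩⟩ ⟨⟨d₁', h₁.symm⟩, ⟨d₂', h₂.symm⟩⟩
  have points_iff (t t' : T) : g t ≠ g t' ↔ ∃ b d d', d ≠ d' ∧ φ b d = t ∧ φ b d' = t' := by
    constructor
    · intro hne
      obtain ⟨b, ⟨⟨d, rfl⟩, ⟨d', rfl⟩⟩, -⟩ := hcover t t' hne
      exact ⟨b, d, d', fun hd => hne (hd ▸ rfl), rfl, rfl⟩
    · rintro ⟨b, d, d', hd, rfl, rfl⟩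
      exact group_ne hd
  refine IsHoleyFactorization.exists_glue_extend hσ
    (fun b => (ψ b).prodMap (.refl _)) (fun b => (ψ b).prodMap (.refl _)) (fun _ _ => rfl)
    (fun _ => three_ne_zero) ?_ ?_ ?_ ?_
  · rintro ⟨t, i⟩ ⟨t', j⟩
    simpa [ψ] using points_iff t t'
  · rintro ⟨t, i⟩ ⟨t', j⟩
    rw [← ne_eq, ne_comm, points_iff]
    constructor
    · rintro ⟨b, d, d', hd, rfl, rfl⟩
      exact ⟨b, (d, i), (d', j), rfl, rfl, hd.symm⟩
    · rintro ⟨b, ⟨d, _⟩, ⟨d', _⟩, hi, hj, hd⟩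
      exact ⟨b, d, d', Ne.symm hd, congrArg Prod.fst hi, congrArg Prod.fst hj⟩
  · rintro b b' ⟨d₁, i₁⟩ ⟨d₂, i₂⟩ ⟨d₁', i₁'⟩ ⟨d₂', i₂'⟩ hd - h₁ h₂
    exact block_unique hd (congrArg Prod.fst h₁) (congrArg Prod.fst h₂)
  · rintro b b' ⟨d₁, i₁⟩ ⟨d₂, i₂⟩ ⟨d₁', i₁'⟩ ⟨d₂', i₂'⟩ hd - h₁ h₂
    exact block_unique (Ne.symm hd) (congrArg Prod.fst h₁) (congrArg Prod.fst h₂)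

/-- The pieces of the Kirkman system that is made from a frame by completing its parts, the fibres
of a map to `Γ`, through three new points: the triangle on the new points, the frame, and for each
part an incomplete Kirkman system on the part and the new points. -/
inductive FillPiece (Γ : Type*)
  | triangle
  | frame
  | part (c : Γ)

namespace FillPiece

variable {T Γ : Type} (g : T → Γ)

/-- The vertices of a piece. -/
def Point : FillPiece Γ → Type
  | triangle => Fin 3
  | frame => T × Fin 6
  | part c => ({t // g t = c} × Fin 6) ⊕ Fin 3

/-- The indices of the factors of a piece. -/
def Index : FillPiece Γ → Type
  | triangle => Unit
  | frame => T × Fin 3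
  | part c => Option ({t // g t = c} × Fin 3)

/-- The graph decomposed by a piece. -/
def graph : ∀ l, SimpleGraph (Point g l)
  | triangle => (⊤ : SimpleGraph (Fin 3))
  | frame => (⊤ : SimpleGraph Γ).comap fun x : T × Fin 6 => g x.1
  | part c => (⊤ : SimpleGraph (Option ({t // g t = c} × Fin 6))).comap Sum.getLeft?

/-- The holes of a piece. -/
def hole : ∀ l, Index g l → Point g l → Prop
  | triangle => fun _ _ => False
  | frame => fun (i : T × Fin 3) (x : T × Fin 6) => g x.1 = g i.1
  | part c => fun (i : Option ({t // g t = c} × Fin 3)) (x : ({t // g t = c} × Fin 6) ⊕ Fin 3) =>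
      i = none ∧ x.getLeft? = none

/-- The inclusion of the vertices of a piece into those of the Kirkman system. -/
def pointEmbedding : ∀ l, Point g l ↪ (T × Fin 6) ⊕ Fin 3
  | triangle => .inr
  | frame => .inl
  | part _ => ((Function.Embedding.subtype _).prodMap (.refl _)).sumMap (.refl _)

/-- The inclusion of the indices of a piece into those of the Kirkman system. -/
def indexEmbedding : ∀ l, Index g l ↪ Option (T × Fin 3)
  | triangle => ⟨fun _ => none, fun _ _ _ => rfl⟩
  | frame => .some
  | part _ => ((Function.Embedding.subtype _).prodMap (.refl _)).optionMap

/-- The part over which a vertex lies; the new points lie over `none`. -/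
def pointPart : (T × Fin 6) ⊕ Fin 3 → Option Γ :=
  Sum.elim (fun x => some (g x.1)) fun _ => none

/-- The part over which an index lies. -/
def indexPart : Option (T × Fin 3) → Option Γ :=
  Option.map fun i => g i.1

open Classical in
/-- The piece that contains the edges between two parts. It is also the piece that determines the
action of the factors over one part on the vertices over another part. -/
noncomputable def owner : Option Γ → Option Γ → FillPiece Γ
  | none, none => triangle
  | some c, none => part c
  | none, some c => part c
  | some c, some c' => if c = c' then part c else frame

theorem owner_of_adj {l : FillPiece Γ} {a b : Point g l} (h : (graph g l).Adj a b) :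
    owner (pointPart g (pointEmbedding g l a)) (pointPart g (pointEmbedding g l b)) = l := by
  rcases l with _ | _ | c
  · rfl
  · exact if_neg h
  · rcases a with ⟨⟨t, rfl⟩, i⟩ | i <;> rcases b with ⟨⟨t', ht'⟩, j⟩ | j
    · exact if_pos ht'.symm
    · rfl
    · exact congrArg part ht'
    · exact (h rfl).elim

theorem owner_of_not_hole {l : FillPiece Γ} {i : Index g l} {a : Point g l} (h : ¬hole g l i a) :
    owner (indexPart g (indexEmbedding g l i)) (pointPart g (pointEmbedding g l a)) = l := by
  rcases l with _ | _ | c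
  · rfl
  · exact if_neg (Ne.symm h)
  · rcases i with _ | ⟨⟨t, rfl⟩, i⟩ <;> rcases a with ⟨⟨t', ht'⟩, j⟩ | j
    · exact congrArg part ht'
    · exact (h ⟨rfl, rfl⟩).elim
    · exact if_pos ht'.symm
    · rfl

theorem exists_adj_of_ne {x y : (T × Fin 6) ⊕ Fin 3} (h : x ≠ y) :
    ∃ l a b, (graph g l).Adj a b ∧ pointEmbedding g l a = x ∧ pointEmbedding g l b = y := by
  rcases x with ⟨t, i⟩ | i <;> rcases y with ⟨t', j⟩ | j
  · by_cases ht : g t = g t'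
    · refine ⟨part (g t), .inl (⟨t, rfl⟩, i), .inl (⟨t', ht.symm⟩, j), fun heq => h ?_, rfl, rfl⟩
      simpa using heq
    · exact ⟨frame, (t, i), (t', j), ht, rfl, rfl⟩
  · exact ⟨part (g t), .inl (⟨t, rfl⟩, i), .inr j, Option.some_ne_none _, rfl, rfl⟩
  · exact ⟨part (g t'), .inr i, .inl (⟨t', rfl⟩, j), (Option.some_ne_none _).symm, rfl, rfl⟩
  · exact ⟨triangle, i, j, fun hij => h (congrArg _ hij), rfl, rfl⟩

theorem exists_not_hole (j : Option (T × Fin 3)) (x : (T × Fin 6) ⊕ Fin 3) :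
    ∃ l i a, indexEmbedding g l i = j ∧ pointEmbedding g l a = x ∧ ¬hole g l i a := by
  rcases j with _ | ⟨t, i⟩ <;> rcases x with ⟨t', j⟩ | j
  · exact ⟨part (g t'), none, .inl (⟨t', rfl⟩, j), rfl, rfl, by simp [hole]⟩
  · exact ⟨triangle, (), j, rfl, rfl, not_false⟩
  · by_cases ht : g t' = g t
    · exact ⟨part (g t), some (⟨t, rfl⟩, i), .inl (⟨t', ht⟩, j), rfl, rfl, by simp [hole]⟩
    · exact ⟨frame, (t, i), (t', j), rfl, rfl, ht⟩
  · exact ⟨part (g t), some (⟨t, rfl⟩, i), .inr j, rfl, rfl, by simp [hole]⟩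

end FillPiece

open FillPiece in
theorem HasKirkmanFrame.hasKirkmanSystem {T Γ : Type} [Fintype T] {g : T → Γ}
    (h : HasKirkmanFrame g) (hpart : ∀ c, HasIncompleteKirkmanSystem {t // g t = c}) :
    HasKirkmanSystem (Fintype.card T) := by
  have exists_piece : ∀ l, ∃ σ, IsHoleyFactorization (graph g l) (hole g l) (fun _ => 3) σ
    | triangle => HasKirkmanSystem.zero.exists_of_card (X := Fin 3) (I := Unit) rfl rfl
    | frame => h
    | part c => hpart c
  choose σ hσ using exists_piece
  obtain ⟨τ, hτ⟩ : ∃ τ : Option (T × Fin 3) → _, IsFactorization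
      (⊤ : SimpleGraph ((T × Fin 6) ⊕ Fin 3)) (fun _ => 3) τ := by
    refine IsHoleyFactorization.exists_glue_extend hσ (pointEmbedding g)
      (indexEmbedding g) (fun _ _ => rfl) (fun _ => three_ne_zero)
      (fun x y => ⟨exists_adj_of_ne g, ?_⟩)
      (fun j x => iff_of_true not_false (exists_not_hole g j x)) ?_ ?_
    · rintro ⟨l, a, b, hab, rfl, rfl⟩
      exact (pointEmbedding g l).injective.ne hab.ne
    · intro l l' a b a' b' hab hab' ha hb
      rw [← owner_of_adj g hab, ha, hb, owner_of_adj g hab']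
    · intro l l' i a i' a' hia hia' hi ha
      rw [← owner_of_not_hole g hia, hi, ha, owner_of_not_hole g hia']
  exact .of_card hτ (by simp [mul_comm]) (by simp [mul_comm])

/-! ### Truncated transversal designs -/

theorem existsUnique_line {R : Type*} [CommRing R] {c c' : R} (h : IsUnit (c - c')) (x y : R) :
    ∃! b : R × R, b.1 + c * b.2 = x ∧ b.1 + c' * b.2 = y := by
  obtain ⟨u, hu⟩ := h
  have mul_inv : (c - c') * ↑u⁻¹ = 1 := hu ▸ u.mul_inv
  refine ⟨(x - c * (↑u⁻¹ * (x - y)), ↑u⁻¹ * (x - y)), ⟨by ring, ?_⟩, ?_⟩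
  · linear_combination (y - x) * mul_inv
  · rintro ⟨b₁, b₂⟩ ⟨rfl, rfl⟩
    ext
    · linear_combination (c * b₂) * mul_inv
    · linear_combination (-b₂) * mul_inv

theorem subsingleton_fiber {α β : Type*} {f : α → β} (hf : f.Injective) (b : β) :
    Subsingleton {a // f a = b} :=
  ⟨fun a a' => Subtype.ext (hf (a.2.trans a'.2.symm))⟩

section TransversalDesign

variable {R T' : Type} {k : ℕ}

/-- The groups of a transversal design with `k` groups indexed by `R`, together with a partial group
`T'`. -/
def transversalGroup : (Fin k × R) ⊕ T' → Option (Fin k) :=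
  Sum.elim (fun x => some x.1) fun _ => none

theorem hasIncompleteKirkmanSystem_transversalGroup [Fintype R] [Fintype T']
    (hR : HasKirkmanSystem (Fintype.card R)) (hT' : HasKirkmanSystem (Fintype.card T')) :
    ∀ o : Option (Fin k), HasIncompleteKirkmanSystem
      {x : (Fin k × R) ⊕ T' // transversalGroup x = o}
  | none => by
    let inclusion (t : T') : {x : (Fin k × R) ⊕ T' // transversalGroup x = none} := ⟨.inr t, rfl⟩
    have bijective : Function.Bijective inclusion := by
      refine ⟨fun t t' h => Sum.inr_injective (congrArg Subtype.val h), ?_⟩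
      rintro ⟨x | t, ht⟩
      · exact (Option.some_ne_none _ ht).elim
      · exact ⟨t, rfl⟩
    exact hT'.hasIncompleteKirkmanSystem.congr (.ofBijective _ bijective)
  | some i => by
    let inclusion (x : R) : {x : (Fin k × R) ⊕ T' // transversalGroup x = some i} :=
      ⟨.inl (i, x), rfl⟩
    have bijective : Function.Bijective inclusion := by
      refine ⟨fun x y h => ?_, ?_⟩
      · exact congrArg Prod.snd (Sum.inl_injective (congrArg Subtype.val h))
      · rintro ⟨⟨j, x⟩ | t, hx⟩
        · obtain rfl : j = i := Option.some_injective _ hx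
          exact ⟨x, rfl⟩
        · exact (Option.some_ne_none _ hx.symm).elim
    exact hR.hasIncompleteKirkmanSystem.congr (.ofBijective _ bijective)

variable [CommRing R]

/-- The block of slope `b.2` through `b.1`, prolonged by the point of `T'`, if any, whose image
under `ι` is the slope. -/
def transversalBlock (c : Fin k → R) (ι : T' → R) (b : R × R) :
    Fin k ⊕ {t // ι t = b.2} → (Fin k × R) ⊕ T' :=
  Sum.map (fun i => (i, b.1 + c i * b.2)) Subtype.val

theorem injective_transversalGroup_comp_block (c : Fin k → R) {ι : T' → R} (hι : ι.Injective)
    (b : R × R) : Function.Injective (transversalGroup ∘ transversalBlock c ι b) := by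
  rintro (i | t) (j | t') h
  · exact congrArg _ (Option.some_injective _ h)
  · exact (Option.some_ne_none _ h).elim
  · exact (Option.some_ne_none _ h.symm).elim
  · rw [(subsingleton_fiber hι b.2).elim t t']

theorem inl_mem_range_transversalBlock {c : Fin k → R} {ι : T' → R} {b : R × R} {i : Fin k}
    {x : R} : .inl (i, x) ∈ Set.range (transversalBlock c ι b) ↔ b.1 + c i * b.2 = x := by
  simp [transversalBlock]

theorem inr_mem_range_transversalBlock {c : Fin k → R} {ι : T' → R} {b : R × R} {t : T'} :
    .inr t ∈ Set.range (transversalBlock c ι b) ↔ b.2 = ι t := by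
  simp [transversalBlock, eq_comm]

theorem existsUnique_transversalBlock {c : Fin k → R}
    (hc : Pairwise fun i j => IsUnit (c i - c j)) (ι : T' → R) (t t' : (Fin k × R) ⊕ T')
    (h : transversalGroup t ≠ transversalGroup t') :
    ∃! b, t ∈ Set.range (transversalBlock c ι b) ∧ t' ∈ Set.range (transversalBlock c ι b) := by
  have line_of_slope (a x m : R) : ∃! b : R × R, b.1 + a * b.2 = x ∧ b.2 = m := by
    refine ⟨(x - a * m, m), ⟨by ring, rfl⟩, ?_⟩
    rintro ⟨b₁, b₂⟩ ⟨rfl, rfl⟩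
    simp
  rcases t with ⟨i, x⟩ | t <;> rcases t' with ⟨j, y⟩ | t' <;>
    simp only [inl_mem_range_transversalBlock, inr_mem_range_transversalBlock]
  · exact existsUnique_line (hc fun hij => h (congrArg some hij)) x y
  · exact line_of_slope (c i) x (ι t')
  · simpa only [and_comm] using line_of_slope (c j) y (ι t)
  · exact (h rfl).elim

theorem HasKirkmanFrame.transversalGroup (hk : k = 4 ∨ k = 5) {c : Fin k → R}
    (hc : Pairwise fun i j => IsUnit (c i - c j)) {ι : T' → R} (hι : ι.Injective) :
    HasKirkmanFrame (transversalGroup : (Fin k × R) ⊕ T' → Option (Fin k)) := by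
  refine .of_blocks (injective_transversalGroup_comp_block c hι)
    (existsUnique_transversalBlock hc ι) fun b => ?_
  have slope := subsingleton_fiber hι b.2
  have := Fintype.ofFinite {t // ι t = b.2}
  have card_le : Fintype.card {t // ι t = b.2} ≤ 1 :=
    Fintype.card_le_one_iff_subsingleton.2 slope
  refine .id_of_card_mem_Icc ?_
  simp only [Fintype.card_sum, Fintype.card_fin, Finset.mem_Icc]
  lia

theorem HasKirkmanSystem.transversal [Fintype R] (hk : k = 4 ∨ k = 5) {c : Fin k → R}
    (hc : Pairwise fun i j => IsUnit (c i - c j)) {t : ℕ} (ht : t ≤ Fintype.card R)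
    (hR : HasKirkmanSystem (Fintype.card R)) (h : HasKirkmanSystem t) :
    HasKirkmanSystem (k * Fintype.card R + t) := by
  obtain ⟨ι⟩ := Function.Embedding.nonempty_of_card_le (α := Fin t) (β := R) (by simpa)
  have frame := HasKirkmanFrame.transversalGroup hk hc ι.injective
  simpa using frame.hasKirkmanSystem
    (hasIncompleteKirkmanSystem_transversalGroup hR (by simpa using h))

end TransversalDesign

/-! ### Kirkman triple systems of every order -/

theorem pairwise_isUnit_sub_of_injective {K ι : Type*} [Field K] {c : ι → K} (hc : c.Injective) :
    Pairwise fun i j => IsUnit (c i - c j) :=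
  fun _ _ hij => (sub_ne_zero.2 (hc.ne hij)).isUnit

theorem pairwise_isUnit_natCast_sub {m k : ℕ} (hm : Nat.Coprime 6 m) (hk : k ≤ 5) :
    Pairwise fun i j : Fin k => IsUnit ((i : ZMod m) - (j : ZMod m)) := by
  have isUnit_of_lt {i j : Fin k} (hij : i < j) : IsUnit ((j : ZMod m) - (i : ZMod m)) := by
    have hdvd : (j - i : ℕ) ∣ 6 ^ 2 := by
      have : (j - i : ℕ) ∈ Finset.Icc 1 4 := Finset.mem_Icc.2 (by lia)
      generalize (j - i : ℕ) = d at this ⊢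
      revert d
      decide
    rw [← Nat.cast_sub hij.le, ZMod.isUnit_iff_coprime]
    exact (hm.pow_left 2).coprime_dvd_left hdvd
  intro i j hij
  rcases hij.lt_or_gt with h | h
  · simpa using (isUnit_of_lt h).neg
  · exact isUnit_of_lt h

namespace HasKirkmanSystem

theorem four_mul_prime_sq_add {p t : ℕ} (hp : p.Prime) (ht : t ≤ p ^ 2)
    (h : HasKirkmanSystem (p ^ 2)) (h' : HasKirkmanSystem t) :
    HasKirkmanSystem (4 * p ^ 2 + t) := by
  have := Fact.mk hp
  have := Fintype.ofFinite (GaloisField p 2)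
  have card : Fintype.card (GaloisField p 2) = p ^ 2 := by
    rw [Fintype.card_eq_nat_card, GaloisField.card p 2 two_ne_zero]
  have card_le : Fintype.card (Fin 4) ≤ Fintype.card (GaloisField p 2) := by
    rw [card, Fintype.card_fin]
    exact Nat.pow_le_pow_left hp.two_le 2
  obtain ⟨c⟩ := Function.Embedding.nonempty_of_card_le card_le
  rw [← card] at ht h ⊢
  exact transversal (.inl rfl) (pairwise_isUnit_sub_of_injective c.injective) ht h h'

theorem mul_add_of_coprime {m k t : ℕ} (hm : Nat.Coprime 6 m) (hk : k = 4 ∨ k = 5) (ht : t ≤ m)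
    (h : HasKirkmanSystem m) (h' : HasKirkmanSystem t) : HasKirkmanSystem (k * m + t) := by
  have : NeZero m := ⟨by rintro rfl; revert hm; decide⟩
  rw [← ZMod.card m] at h ht ⊢
  exact transversal hk (pairwise_isUnit_natCast_sub hm (by lia)) ht h h'

theorem exists_eq_mul_add {n : ℕ} (hn : 20 ≤ n) (hn' : n ≠ 43) :
    ∃ m k t, Nat.Coprime 6 m ∧ (k = 4 ∨ k = 5) ∧ t ≤ m ∧ n = k * m + t ∧ m < n := by
  obtain ⟨m, hm, hmn⟩ : ∃ m, (m % 6 = 1 ∨ m % 6 = 5) ∧ 4 * m ≤ n ∧ n ≤ 6 * m := by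
    by_cases h : (n - 4) % 24 < 16
    · exact ⟨6 * ((n - 4) / 24) + 1, by lia⟩
    · exact ⟨6 * ((n - 4) / 24) + 5, by lia⟩
  have coprime : Nat.Coprime 6 m := by
    rw [Nat.coprime_iff_gcd_eq_one, Nat.gcd_rec]
    rcases hm with hm | hm <;> rw [hm] <;> rfl
  rcases le_total n (5 * m) with h | h
  · exact ⟨m, 4, n - 4 * m, coprime, by lia⟩
  · exact ⟨m, 5, n - 5 * m, coprime, by lia⟩

theorem all (n : ℕ) : HasKirkmanSystem n := by
  induction n using Nat.strong_induction_on with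
  | h n ih =>
    by_cases h₁ : n ≤ 15
    · exact of_le_fifteen h₁
    by_cases h₂ : n < 20
    · obtain ⟨t, rfl⟩ := Nat.exists_eq_add_of_le (by lia : 16 ≤ n)
      exact four_mul_prime_sq_add Nat.prime_two (by lia) .four (of_le_fifteen (by lia))
    by_cases h₃ : n = 43
    · exact h₃ ▸ four_mul_prime_sq_add Nat.prime_three (t := 7) (by simp) .nine .seven
    obtain ⟨m, k, t, hm, hk, ht, rfl, hmn⟩ := exists_eq_mul_add (not_lt.1 h₂) h₃
    exact mul_add_of_coprime hm hk ht (ih m hmn) (ih t (ht.trans_lt hmn))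

end HasKirkmanSystem

/-! ### Factorizations of `K_{7,7,7}` and `K₂₁` -/

/-- There is a decomposition of `G` into `r` `C_m`-factors and `s` `C_k`-factors, presented by
maps as in `IsHoleyFactorization`. -/
def HasCycleFactorization {X : Type*} (G : SimpleGraph X) (m k r s : ℕ) : Prop :=
  ∃ σ : Fin r ⊕ Fin s → X → X, IsFactorization G (Sum.elim (fun _ => m) fun _ => k) σ

/-- The complete tripartite graph whose parts are three copies of `A`. -/
abbrev completeTripartite (A : Type*) : SimpleGraph (Fin 3 × A) :=
  (⊤ : SimpleGraph (Fin 3)).comap Prod.fst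

namespace HasCycleFactorization

theorem of_card {X I : Type*} [Fintype I] {G : SimpleGraph X} {l : I → ℕ} {σ : I → X → X}
    (h : IsFactorization G l σ) {m k r s : ℕ} (hl : ∀ i, l i = m ∨ l i = k)
    (hr : Fintype.card {i // l i = m} = r) (hs : Fintype.card {i // l i ≠ m} = s) :
    HasCycleFactorization G m k r s := by
  let f : I ≃ Fin r ⊕ Fin s := (Equiv.sumCompl (l · = m)).symm.trans
    ((Fintype.equivFinOfCardEq hr).sumCongr (Fintype.equivFinOfCardEq hs))
  refine ⟨_, h.transport (.refl X) f (fun _ _ => Iff.rfl) (fun _ _ => Iff.rfl) fun i => ?_⟩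
  by_cases hi : l i = m
  · simp [f, hi]
  · simpa [f, Equiv.sumCompl_symm_apply_of_neg (p := (l · = m)) hi]
      using ((hl i).resolve_left hi).symm

theorem congr {X Y : Type*} {G : SimpleGraph X} {G' : SimpleGraph Y} {m k r s : ℕ}
    (h : HasCycleFactorization G m k r s) (e : X ≃ Y)
    (hG : ∀ x y, G'.Adj (e x) (e y) ↔ G.Adj x y) : HasCycleFactorization G' m k r s :=
  have ⟨_, hσ⟩ := h
  ⟨_, hσ.transport e (.refl _) hG (fun _ _ => Iff.rfl) fun _ => rfl⟩

theorem of_develop {A B C P : Type*} [AddGroup A] [Fintype A] [Fintype B] [Fintype C] [Fintype P]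
    {G : SimpleGraph (A × P)} [DecidableRel G.Adj] (β : B → A × P → A × P) (γ : C → P → A × P)
    (l : B ⊕ C → ℕ) {m k r s : ℕ} [NeZero m] [NeZero k] (hl : ∀ i, l i = m ∨ l i = k)
    (hr : Fintype.card {i // (l ∘ Sum.map Prod.snd id : (A × B) ⊕ C → ℕ) i = m} = r)
    (hs : Fintype.card {i // (l ∘ Sum.map Prod.snd id : (A × B) ⊕ C → ℕ) i ≠ m} = s)
    (hG : ∀ t x y, G.Adj (translateVertex t x) (translateVertex t y) ↔ G.Adj x y)
    (h : ∀ p, IsHoleyFactorization.IsLocalAt G (fun _ _ => False) (l ∘ Sum.map Prod.snd id)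
      (develop β γ) (0, p)) :
    HasCycleFactorization G m k r s := by
  refine of_card (isHoleyFactorization_develop (fun i => ?_) hG (fun _ _ _ => Iff.rfl)
    ?_ h) (fun _ => hl _) hr hs
  · rcases hl (Sum.map Prod.snd id i) with hi | hi <;> simp [hi, NeZero.ne]
  · rintro t (⟨a, b⟩ | c) <;> rfl

set_option maxRecDepth 100000 in
theorem completeTripartite_one_six : HasCycleFactorization (completeTripartite (Fin 7)) 3 7 1 6 :=
  of_develop (B := Fin 0) ![]
    ![![(2, 3), (2, 6), (1, 5), (1, 2), (2, 0), (2, 1), (2, 4)],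
      ![(2, 1), (1, 3), (1, 4), (1, 6), (2, 5), (1, 0), (1, 2)],
      ![(2, 2), (2, 4), (2, 5), (2, 6), (2, 3), (1, 1), (1, 0)],
      ![(1, 3), (1, 4), (1, 1), (2, 5), (1, 0), (1, 6), (2, 2)],
      ![(1, 2), (1, 6), (2, 1), (1, 5), (1, 3), (2, 0), (1, 4)],
      ![(1, 1), (2, 3), (2, 4), (2, 2), (1, 5), (2, 6), (2, 0)],
      ![(1, 0), (1, 1), (1, 2), (1, 3), (1, 4), (1, 5), (1, 6)]]
    (Sum.elim ![] ![7, 7, 7, 7, 7, 7, 3])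
    (by decide) (by decide) (by decide) (by simp [translateVertex]) (by decide +kernel)

set_option maxRecDepth 100000 in
theorem completeTripartite_four_three :
    HasCycleFactorization (completeTripartite (Fin 7)) 3 7 4 3 :=
  of_develop (B := Fin 0) ![]
    ![![(1, 2), (1, 4), (2, 3), (1, 6), (1, 5), (2, 0), (1, 1)],
      ![(2, 1), (2, 5), (2, 4), (1, 0), (1, 3), (2, 6), (2, 2)],
      ![(1, 1), (1, 6), (1, 0), (2, 5), (2, 2), (1, 4), (1, 3)],
      ![(1, 6), (1, 2), (1, 3), (1, 1), (1, 0), (1, 5), (1, 4)],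
      ![(1, 3), (1, 1), (1, 2), (1, 5), (1, 4), (1, 0), (1, 6)],
      ![(1, 4), (1, 5), (1, 1), (1, 3), (1, 6), (1, 2), (1, 0)],
      ![(1, 0), (1, 3), (1, 5), (1, 4), (1, 1), (1, 6), (1, 2)]]
    (Sum.elim ![] ![7, 7, 7, 3, 3, 3, 3])
    (by decide) (by decide) (by decide) (by simp [translateVertex]) (by decide +kernel)

set_option maxRecDepth 100000 in
theorem completeTripartite_five_two : HasCycleFactorization (completeTripartite (Fin 7)) 3 7 5 2 :=
  of_develop
    (fun _ : Unit => cyclesMap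
      [[(0, 0), (1, 1), (2, 0)], [(0, 1), (1, 6), (2, 5)], [(0, 2), (1, 5), (2, 2)],
       [(0, 3), (1, 3), (2, 1)], [(0, 4), (1, 0), (2, 3)], [(0, 5), (1, 4), (2, 4)],
       [(0, 6), (1, 2), (2, 6)]])
    ![![(1, 2), (2, 4), (2, 1), (2, 5), (2, 6), (1, 0), (2, 3)],
      ![(2, 2), (2, 6), (1, 3), (1, 5), (2, 0), (2, 1), (2, 4)],
      ![(1, 6), (1, 4), (1, 1), (1, 0), (1, 2), (1, 5), (1, 3)],
      ![(1, 5), (1, 1), (1, 4), (1, 2), (1, 3), (1, 6), (1, 0)]]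
    (Sum.elim (fun _ => 3) ![7, 7, 3, 3])
    (by decide) (by decide) (by decide) (by simp [translateVertex]) (by decide +kernel)

set_option maxRecDepth 100000 in
theorem completeTripartite_seven_zero :
    HasCycleFactorization (completeTripartite (Fin 7)) 3 7 7 0 := by
  refine congr (G := (⊤ : SimpleGraph (Fin 3)).comap (Prod.snd : Fin 7 × Fin 3 → Fin 3)) ?_
    (Equiv.prodComm _ _) fun _ _ => Iff.rfl
  exact of_develop (B := Fin 0) ![] (fun d : Fin 7 => ![(d, 1), (d, 2), (-2 * d, 0)])
    (fun _ => 3)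
    (by decide) (by decide) (by decide) (fun _ _ _ => Iff.rfl) (by decide +kernel)

/-- Three heptagons on `Fin 7 × Fin 3`, permuted by `(x, p) ↦ (2 * x, p + 1)`, whose translates form
a decomposition of the complete tripartite graph into heptagon factors. -/
def tripartiteHeptagons : List (List (Fin 7 × Fin 3)) :=
  [[(0, 0), (1, 1), (6, 2), (2, 1), (1, 2), (5, 1), (5, 2)],
   [(0, 1), (2, 2), (5, 0), (4, 2), (2, 0), (3, 2), (3, 0)],
   [(0, 2), (4, 0), (3, 1), (1, 0), (4, 1), (6, 0), (6, 1)]]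

set_option maxRecDepth 100000 in
theorem completeTripartite_zero_seven :
    HasCycleFactorization (completeTripartite (Fin 7)) 3 7 0 7 := by
  refine congr (G := (⊤ : SimpleGraph (Fin 3)).comap (Prod.snd : Fin 7 × Fin 3 → Fin 3)) ?_
    (Equiv.prodComm _ _) fun _ _ => Iff.rfl
  exact of_develop (C := Fin 0) (fun _ : Unit => cyclesMap tripartiteHeptagons) ![] (fun _ => 7)
    (by decide) (by decide) (by decide) (fun _ _ _ => Iff.rfl) (by decide +kernel)

set_option maxRecDepth 100000 in
theorem top_zero_ten : HasCycleFactorization (⊤ : SimpleGraph (Fin 7 × Fin 3)) 3 7 0 10 :=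
  of_develop (fun _ : Unit => cyclesMap tripartiteHeptagons)
    ![fun p => (1, p), fun p => (2, p), fun p => (3, p)]
    (fun _ => 7)
    (by decide) (by decide) (by decide) (by simp) (by decide +kernel)

set_option maxRecDepth 100000 in
theorem top_nine_one : HasCycleFactorization (⊤ : SimpleGraph (Fin 7 × Fin 3)) 3 7 9 1 :=
  of_develop
    (fun _ : Unit => cyclesMap
      [[(0, 0), (0, 1), (0, 2)], [(1, 0), (2, 2), (5, 2)], [(1, 1), (2, 0), (4, 0)],
       [(1, 2), (3, 2), (5, 0)], [(2, 1), (4, 2), (6, 1)], [(3, 0), (4, 1), (6, 0)],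
       [(3, 1), (5, 1), (6, 2)]])
    ![![(3, 1), (6, 2), (5, 0)], ![(2, 1), (4, 2), (1, 0)], ![(1, 0), (1, 1), (1, 2)]]
    (Sum.elim (fun _ => 3) ![3, 3, 7])
    (by decide) (by decide) (by decide) (by simp) (by decide +kernel)

theorem top_ten_zero : HasCycleFactorization (⊤ : SimpleGraph (Fin 7 × Fin 3)) 3 7 10 0 :=
  have ⟨_, hσ⟩ := HasKirkmanSystem.three.exists_of_card (X := Fin 7 × Fin 3) (I := Fin 10) rfl rfl
  of_card hσ (fun _ => .inl rfl) (by simp) (by simp)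

theorem completeTripartite_of_mem {s : ℕ} (hs : s ∈ ({0, 2, 3, 6, 7} : Finset ℕ)) :
    HasCycleFactorization (completeTripartite (Fin 7)) 3 7 (7 - s) s := by
  fin_cases hs
  exacts [completeTripartite_seven_zero, completeTripartite_five_two, completeTripartite_four_three,
    completeTripartite_one_six, completeTripartite_zero_seven]

theorem top_of_mem {s : ℕ} (hs : s ∈ ({0, 1, 10} : Finset ℕ)) :
    HasCycleFactorization (⊤ : SimpleGraph (Fin 3 × Fin 7)) 3 7 (10 - s) s := by
  refine congr (G := (⊤ : SimpleGraph (Fin 7 × Fin 3))) ?_ (Equiv.prodComm _ _) (by simp)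
  fin_cases hs
  exacts [top_ten_zero, top_nine_one, top_zero_ten]

end HasCycleFactorization

/-! ### Blowing up a Kirkman triple system -/

section BlowUp

universe u

variable {Y : Type u} {A I : Type*}

theorem exists_triangle_equiv {σ : I → Y → Y}
    (hσ : IsFactorization (⊤ : SimpleGraph Y) (fun _ => 3) σ) :
    ∃ (S : I → Type u) (e : ∀ i, S i × Fin 3 ≃ Y),
      ∀ x y, x ≠ y → ∃! i, ((e i).symm x).1 = ((e i).symm y).1 := by
  choose S e he using fun i =>
    exists_orbit_equiv Nat.prime_three (hσ.iterate_eq i) fun x => hσ.ne_of_not_hole not_false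
  refine ⟨S, e, fun x y hxy => ?_⟩
  have joins_iff (i : I) :
      (σ i x = y ∨ σ i y = x) ↔ ((e i).symm x).1 = ((e i).symm y).1 := by
    obtain ⟨⟨s, j⟩, rfl⟩ := (e i).surjective x
    obtain ⟨⟨s', j'⟩, rfl⟩ := (e i).surjective y
    have cyclic : ∀ j j' : Fin 3, j ≠ j' → (j + 1 = j' ∨ j' + 1 = j) := by decide
    simp only [he, (e i).apply_eq_iff_eq, Prod.mk.injEq, Equiv.symm_apply_apply]
    constructor
    · rintro (⟨rfl, -⟩ | ⟨rfl, -⟩) <;> rfl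
    · rintro rfl
      simpa using cyclic j j' fun hj => hxy (hj ▸ rfl)
  simpa only [joins_iff] using hσ.existsUnique x y hxy

/-- The graph to be decomposed on the blow-up `Fin 3 × A` of a triangle of the `i`-th factor: the
complete tripartite graph, to which the edges inside the parts are added for `i = i₀`. -/
def blowUpGraph (A : Type*) (i₀ i : I) : SimpleGraph (Fin 3 × A) where
  Adj x y := x ≠ y ∧ (x.1 ≠ y.1 ∨ i = i₀)
  symm := ⟨fun _ _ h => ⟨h.1.symm, h.2.imp_left Ne.symm⟩⟩
  loopless := ⟨fun _ h => h.1 rfl⟩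

theorem blowUpGraph_self (i₀ : I) : blowUpGraph A i₀ i₀ = ⊤ := by
  ext x y
  simp [blowUpGraph]

theorem blowUpGraph_of_ne {i₀ i : I} (hi : i ≠ i₀) :
    blowUpGraph A i₀ i = completeTripartite A := by
  ext x y
  simp only [blowUpGraph, hi, or_false, comap_adj, top_adj]
  exact and_iff_right_of_imp fun h hxy => h (hxy ▸ rfl)

section

variable {S : I → Type*} (e : ∀ i, S i × Fin 3 ≃ Y)

/-- The copy of `Fin 3 × A` above a triangle, when `e i` lists the triangles of the `i`-th
factor. -/
def blowUpEmbedding (l : Σ i, S i) : Fin 3 × A ↪ Y × A :=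
  ((Function.Embedding.sectR l.2 _).trans (e l.1).toEmbedding).prodMap (.refl A)

variable {e}

theorem sigma_eq_of_blowUpEmbedding_eq {i : I} {s s' : S i} {v v' : Fin 3 × A}
    (h : blowUpEmbedding e ⟨i, s⟩ v = blowUpEmbedding e ⟨i, s'⟩ v') :
    (⟨i, s⟩ : Σ i, S i) = ⟨i, s'⟩ :=
  congrArg (Sigma.mk i) (congrArg Prod.fst ((e i).injective (congrArg Prod.fst h)))

theorem exists_blowUpGraph_adj (he : ∀ x y, x ≠ y → ∃! i, ((e i).symm x).1 = ((e i).symm y).1)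
    (i₀ : I) {x y : Y × A} (hxy : x ≠ y) :
    ∃ l v w, (blowUpGraph A i₀ l.1).Adj v w ∧
      blowUpEmbedding e l v = x ∧ blowUpEmbedding e l w = y := by
  obtain ⟨x, a⟩ := x
  obtain ⟨y, b⟩ := y
  obtain ⟨i, htriangle, hi⟩ : ∃ i, ((e i).symm x).1 = ((e i).symm y).1 ∧ (x ≠ y ∨ i = i₀) := by
    rcases eq_or_ne x y with rfl | hne
    · exact ⟨i₀, rfl, .inr rfl⟩
    · exact (he x y hne).exists.imp fun i hi => ⟨hi, .inl hne⟩
  obtain ⟨⟨s, j⟩, rfl⟩ := (e i).surjective x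
  obtain ⟨⟨s', j'⟩, rfl⟩ := (e i).surjective y
  obtain rfl : s = s' := by simpa using htriangle
  refine ⟨⟨i, s⟩, (j, a), (j', b), ⟨?_, hi.imp_left ?_⟩, rfl, rfl⟩
  · rintro ⟨⟩
    exact hxy rfl
  · rintro hne rfl
    exact hne rfl

theorem sigma_eq_of_blowUpGraph_adj
    (he : ∀ x y, x ≠ y → ∃! i, ((e i).symm x).1 = ((e i).symm y).1) {i₀ : I} {l l' : Σ i, S i}
    {v w v' w' : Fin 3 × A}
    (hadj : (blowUpGraph A i₀ l.1).Adj v w) (hadj' : (blowUpGraph A i₀ l'.1).Adj v' w')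
    (hv : blowUpEmbedding e l v = blowUpEmbedding e l' v')
    (hw : blowUpEmbedding e l w = blowUpEmbedding e l' w') : l = l' := by
  obtain ⟨i, s⟩ := l
  obtain ⟨i', s'⟩ := l'
  have hx : e i (s, v.1) = e i' (s', v'.1) := congrArg Prod.fst hv
  have hy : e i (s, w.1) = e i' (s', w'.1) := congrArg Prod.fst hw
  obtain rfl : i = i' := by
    by_cases hxy : e i (s, v.1) = e i (s, w.1)
    · have part_eq : v.1 = w.1 := by simpa using hxy
      have part_eq' : v'.1 = w'.1 := by simpa using hx.symm.trans (hxy.trans hy)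
      have hi : i = i₀ := hadj.2.resolve_left (not_not.2 part_eq)
      have hi' : i' = i₀ := hadj'.2.resolve_left (not_not.2 part_eq')
      exact hi.trans hi'.symm
    · exact (he _ _ hxy).unique (by simp) (by simp [hx, hy])
  exact sigma_eq_of_blowUpEmbedding_eq hv

end

theorem IsHoleyFactorization.exists_blowUp {σ : I → Y → Y}
    (hσ : IsFactorization (⊤ : SimpleGraph Y) (fun _ => 3) σ) (i₀ : I) {L : I → Type*}
    {k : ∀ i, L i → ℕ} (hk : ∀ i j, k i j ≠ 0) {τ : ∀ i, L i → Fin 3 × A → Fin 3 × A}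
    (hτ : ∀ i, IsFactorization (blowUpGraph A i₀ i) (k i) (τ i)) :
    ∃ ρ : (Σ i, L i) → Y × A → Y × A,
      IsFactorization (⊤ : SimpleGraph (Y × A)) (fun j => k j.1 j.2) ρ := by
  obtain ⟨S, e, he⟩ := exists_triangle_equiv hσ
  refine exists_glue_extend (fun l : Σ i, S i => hτ l.1) (blowUpEmbedding e)
    (fun l => .sigmaMk l.1) (fun _ _ => rfl) (fun j => hk j.1 j.2)
    (fun x y => ⟨exists_blowUpGraph_adj he i₀, ?_⟩) ?_
    (fun _ _ _ _ _ _ => sigma_eq_of_blowUpGraph_adj he) ?_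
  · rintro ⟨l, v, w, hvw, rfl, rfl⟩
    exact (blowUpEmbedding e l).injective.ne hvw.1
  · rintro ⟨i, j⟩ ⟨x, a⟩
    exact iff_of_true not_false ⟨⟨i, ((e i).symm x).1⟩, j, (((e i).symm x).2, a), rfl,
      by simp [blowUpEmbedding], not_false⟩
  · rintro ⟨i, s⟩ ⟨i', s'⟩ j v j' v' - - hj hv
    obtain rfl : i = i' := congrArg Sigma.fst hj
    exact sigma_eq_of_blowUpEmbedding_eq hv

namespace HasCycleFactorization

theorem blowUp {M m k : ℕ} [NeZero m] [NeZero k] {σ : Fin M → Y → Y}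
    (hσ : IsFactorization (⊤ : SimpleGraph Y) (fun _ => 3) σ) (i₀ : Fin M) {r s : Fin M → ℕ}
    (h₀ : HasCycleFactorization (⊤ : SimpleGraph (Fin 3 × A)) m k (r i₀) (s i₀))
    (h : ∀ i ≠ i₀, HasCycleFactorization (completeTripartite A) m k (r i) (s i)) :
    HasCycleFactorization (⊤ : SimpleGraph (Y × A)) m k (∑ i, r i) (∑ i, s i) := by
  have ingredient (i : Fin M) : HasCycleFactorization (blowUpGraph A i₀ i) m k (r i) (s i) := by
    rcases eq_or_ne i i₀ with rfl | hi
    · rwa [blowUpGraph_self]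
    · rw [blowUpGraph_of_ne hi]
      exact h i hi
  choose τ hτ using ingredient
  obtain ⟨ρ, hρ⟩ := hσ.exists_blowUp i₀ (by simp [NeZero.ne]) hτ
  exact ⟨_, hρ.transport (.refl _)
    ((Equiv.sigmaSumDistrib _ _).trans (finSigmaFinEquiv.sumCongr finSigmaFinEquiv))
    (fun _ _ => Iff.rfl) (fun _ _ => Iff.rfl) (by rintro ⟨i, j | j⟩ <;> rfl)⟩

end HasCycleFactorization

end BlowUp

theorem exists_sum_eq {N m : ℕ} (hN : 3 ≤ N) (hm : m ≤ 7 * N) (hne : m ≠ 1) :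
    ∃ f : Fin N → ℕ, (∀ i, f i ∈ ({0, 2, 3, 6, 7} : Finset ℕ)) ∧ ∑ i, f i = m := by
  induction N, hN using Nat.le_induction generalizing m with
  | base =>
    have three_terms : ∀ m ∈ Finset.range 22, m ≠ 1 →
        ∃ a ∈ ({0, 2, 3, 6, 7} : Finset ℕ), ∃ b ∈ ({0, 2, 3, 6, 7} : Finset ℕ),
          ∃ c ∈ ({0, 2, 3, 6, 7} : Finset ℕ), a + b + c = m := by decide
    obtain ⟨a, ha, b, hb, c, hc, rfl⟩ := three_terms m (Finset.mem_range.2 (by lia)) hne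
    exact ⟨![a, b, c], Fin.cases ha (Fin.cases hb (Fin.cases hc (Fin.elim0 ·))),
      by simp [Fin.sum_univ_three]⟩
  | succ N _ ih =>
    obtain ⟨d, hd, hdm, hle, hne'⟩ : ∃ d ∈ ({0, 2, 3, 6, 7} : Finset ℕ),
        d ≤ m ∧ m - d ≤ 7 * N ∧ m - d ≠ 1 := by
      rcases lt_or_ge m 7 with h7 | h7
      · exact ⟨0, by simp, by lia, by lia, by lia⟩
      · rcases eq_or_ne m 8 with rfl | h8
        · exact ⟨6, by simp, by lia, by lia, by lia⟩
        · exact ⟨7, by simp, by lia, by lia, by lia⟩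
    obtain ⟨f, hf, hsum⟩ := ih hle hne'
    exact ⟨Fin.cons d f, Fin.cases hd hf, by simp [Fin.sum_univ_succ, hsum, hdm]⟩

theorem exists_cons_sum_eq {N s : ℕ} (hN : 3 ≤ N) (hs : s ≤ 7 * N + 10) :
    ∃ (d : ℕ) (f : Fin N → ℕ), d ∈ ({0, 1, 10} : Finset ℕ) ∧
      (∀ i, f i ∈ ({0, 2, 3, 6, 7} : Finset ℕ)) ∧ d + ∑ i, f i = s := by
  obtain ⟨d, hd, hds, hle, hne⟩ : ∃ d ∈ ({0, 1, 10} : Finset ℕ),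
      d ≤ s ∧ s - d ≤ 7 * N ∧ s - d ≠ 1 := by
    rcases eq_or_ne s 1 with rfl | h1
    · exact ⟨1, by simp, by lia, by lia, by lia⟩
    · rcases le_or_gt s (7 * N) with hle | hlt
      · exact ⟨0, by simp, by lia, by lia, by lia⟩
      · exact ⟨10, by simp, by lia, by lia, by lia⟩
  obtain ⟨f, hf, hsum⟩ := exists_sum_eq hN hle hne
  exact ⟨d, f, hd, hf, by lia⟩

theorem hasCycleFactorization_top {t r s : ℕ} (ht : 1 ≤ t) (hrs : r + s = 21 * t + 10) :
    HasCycleFactorization (⊤ : SimpleGraph (Fin (6 * t + 3) × Fin 7)) 3 7 r s := by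
  obtain ⟨σ, hσ⟩ := HasKirkmanSystem.all t
  obtain ⟨d, f, hd, hf, rfl⟩ := exists_cons_sum_eq (N := 3 * t) (s := s) (by lia) (by lia)
  have le_seven (i : Fin (3 * t)) : f i ≤ 7 :=
    (by decide : ∀ a ∈ ({0, 2, 3, 6, 7} : Finset ℕ), a ≤ 7) _ (hf i)
  have le_ten : d ≤ 10 := (by decide : ∀ a ∈ ({0, 1, 10} : Finset ℕ), a ≤ 10) _ hd
  have sum_sub : ∑ i, (7 - f i) + ∑ i, f i = 21 * t := by
    rw [← Finset.sum_add_distrib, Finset.sum_congr rfl fun i _ => Nat.sub_add_cancel (le_seven i),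
      Fin.sum_const, smul_eq_mul]
    ring
  obtain rfl : r = 10 - d + ∑ i, (7 - f i) := by lia
  have blowUp := HasCycleFactorization.blowUp hσ 0 (r := Fin.cons (10 - d) fun i => 7 - f i)
    (s := Fin.cons d f) (HasCycleFactorization.top_of_mem hd)
    (Fin.cases (absurd rfl) fun i _ => HasCycleFactorization.completeTripartite_of_mem (hf i))
  simpa only [Fin.sum_univ_succ, Fin.cons_zero, Fin.cons_succ] using blowUp

/-! ### Back to cycle factors -/

section CycleFactor

theorem supp_connectedComponentMk_eq_range {V W : Type*} {H : SimpleGraph W} {F : SimpleGraph V}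
    (hH : H.Preconnected) (ψ : H ↪g F)
    (hclosed : ∀ w y, F.Adj (ψ w) y → y ∈ Set.range ψ) (w : W) :
    (F.connectedComponentMk (ψ w)).supp = Set.range ψ := by
  ext y
  rw [ConnectedComponent.mem_supp_iff, ConnectedComponent.eq]
  constructor
  · intro h
    rw [reachable_comm, reachable_iff_reflTransGen] at h
    induction h with
    | refl => exact ⟨w, rfl⟩
    | tail _ hyz ih =>
      obtain ⟨v, rfl⟩ := ih
      exact hclosed v _ hyz
  · rintro ⟨v, rfl⟩
    exact (hH v w).map ψ.toHom

theorem isHFactor_of_forall_exists_embedding {V W : Type*} {H : SimpleGraph W} {F : SimpleGraph V}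
    (hH : H.Preconnected)
    (h : ∀ x, ∃ ψ : H ↪g F, x ∈ Set.range ψ ∧ ∀ w y, F.Adj (ψ w) y → y ∈ Set.range ψ) :
    IsHFactor H F := by
  intro c
  induction c using ConnectedComponent.ind with
  | h x =>
    obtain ⟨ψ, ⟨w, rfl⟩, hclosed⟩ := h x
    rw [supp_connectedComponentMk_eq_range hH ψ hclosed w]
    exact ⟨ψ.isoInduceRange.symm⟩

theorem cycleGraph_adj_iff {p : ℕ} [NeZero p] (i j : Fin p) :
    (cycleGraph p).Adj i j ↔ i ≠ j ∧ (i + 1 = j ∨ j + 1 = i) := by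
  cases p with
  | zero => exact i.elim0
  | succ m =>
    rw [cycleGraph_eq_circulantGraph, circulantGraph, fromRel_adj, or_comm]
    simp only [Set.mem_singleton_iff, sub_eq_iff_eq_add', eq_comm]

theorem isCycleFactor_fromRel {V : Type*} {p : ℕ} (hp : p.Prime) {f : V → V}
    (hf : ∀ x, f^[p] x = x) (hne : ∀ x, f x ≠ x) :
    IsCycleFactor p (SimpleGraph.fromRel fun x y => f x = y) := by
  have : NeZero p := ⟨hp.ne_zero⟩
  obtain ⟨S, e, he⟩ := exists_orbit_equiv hp hf hne
  have apply_eq_iff (s s' : S) (i j : Fin p) :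
      f (e (s, i)) = e (s', j) ↔ s = s' ∧ i + 1 = j := by
    rw [he, e.apply_eq_iff_eq, Prod.mk.injEq]
  refine isHFactor_of_forall_exists_embedding cycleGraph_preconnected fun x => ?_
  obtain ⟨⟨s, i⟩, rfl⟩ := e.surjective x
  refine ⟨⟨⟨fun j => e (s, j), fun j j' h => by simpa using h⟩, ?_⟩, ⟨i, rfl⟩, fun j y hy => ?_⟩
  · intro j j'
    change (fromRel _).Adj (e (s, j)) (e (s, j')) ↔ _
    simp [apply_eq_iff, cycleGraph_adj_iff]
  · obtain ⟨⟨s', j'⟩, rfl⟩ := e.surjective y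
    obtain rfl : s' = s := by
      rcases (fromRel_adj ..).1 hy with ⟨-, h | h⟩
      · exact ((apply_eq_iff ..).1 h).1.symm
      · exact ((apply_eq_iff ..).1 h).1
    exact ⟨j', rfl⟩

end CycleFactor

theorem HasCycleFactorization.isCycleDecomp {V : Type*} {G : SimpleGraph V} {m k r s : ℕ}
    (h : HasCycleFactorization G m k r s) (hm : m.Prime) (hk : k.Prime) :
    IsCycleDecomp G m k r s := by
  obtain ⟨σ, hσ⟩ := h
  have ne (i) (x : V) : σ i x ≠ x := hσ.ne_of_not_hole not_false
  refine ⟨fun i => .fromRel fun x y => σ i x = y, fun i x y hxy => ?_, fun e he => ?_,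
    fun i => isCycleFactor_fromRel hm (hσ.iterate_eq (.inl i)) (ne _),
    fun j => isCycleFactor_fromRel hk (hσ.iterate_eq (.inr j)) (ne _)⟩
  · obtain ⟨-, rfl | rfl⟩ := (fromRel_adj ..).1 hxy
    · exact hσ.adj_apply i x not_false
    · exact (hσ.adj_apply i y not_false).symm
  · induction e with
    | h x y =>
      have hne : x ≠ y := G.ne_of_adj he
      simpa only [mem_edgeSet, fromRel_adj, hne, ne_eq, not_false_eq_true, true_and]
        using hσ.existsUnique x y he

theorem HW_large_general (n r s : ℕ) (hn : n % 42 = 21) (hn' : 21 < n)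
    (hrs : r + s = (n - 1) / 2) : IsCycleDecomp (⊤ : SimpleGraph (Fin n)) 3 7 r s := by
  obtain ⟨t, rfl⟩ : ∃ t, n = 42 * t + 21 := ⟨n / 42, by lia⟩
  have factorization : HasCycleFactorization _ 3 7 r s :=
    hasCycleFactorization_top (t := t) (by lia) (by lia)
  have card_eq : Fintype.card (Fin (6 * t + 3) × Fin 7) = 42 * t + 21 := by
    rw [Fintype.card_prod, Fintype.card_fin, Fintype.card_fin]
    ring
  exact (factorization.congr (Fintype.equivFinOfCardEq card_eq) (by simp)).isCycleDecomp
    Nat.prime_three Nat.prime_seven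

/-- For every `n ≡ 21 (mod 42)` with `n > 21` and all positive `r, s` with
`r + s = (n-1)/2`, an `HW(n; r, s; 3, 7)` exists, i.e. `K_n` decomposes into
`r` `C₃`-factors and `s` `C₇`-factors. -/
theorem HW_large (n r s : ℕ) (hn : n % 42 = 21) (hn' : 21 < n)
    (hr : 0 < r) (hs : 0 < s) (hrs : r + s = (n - 1) / 2) :
    IsCycleDecomp (⊤ : SimpleGraph (Fin n)) 3 7 r s :=
  HW_large_general n r s hn hn' hrs
end
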